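/- arXiv:2410.09334 — 9 statements merged into one kernel-verified Lean document; each statement's English description precedes it below -/
import Mathlib

section
/- Fix an integer m* ≥ 0 and let ω be a nonempty open subset of ℝ^d. Then there exists a smooth function μ : ℝ^d → ℝ with compact support contained in ω such that ∫_{ℝ^d} μ(x) dx = 1 and ∫_{ℝ^d} x^I μ(x) dx = 0 for every multi-index I ∈ ℕ^d with 0 < |I| ≤ m*. -/
/-!
Let `φ` be a smooth bump function supported in a ball inside `ω`. The kernel is sought in the form
`μ = p φ` with `p` a real polynomial of degree at most `m*` in each variable. The moments of `p φ`
are linear in the coefficients of `p`, and the matrix of this linear map is the Gram matrix of the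
monomials for the form `(p, q) ↦ ∫ p q φ`. This form is positive definite: if `∫ p² φ = 0`, then
`p` vanishes on the ball, hence `p = 0`. So the moment map is injective, and by equality of
dimensions surjective: some `p` realises the moment vector that is `1` at `I = 0` and `0` elsewhere.
Indexing by all exponents in `{0, …, m*}^d`, which contains every `I` with `|I| ≤ m*`, suffices.
-/

/-- A polynomial function vanishing on a nonempty open ball has zero coefficients. -/
lemma coeff_eq_zero_of_vanish_on_ball {d m : ℕ} (x₀ : Fin d → ℝ) {r : ℝ} (hr : 0 < r)
    (c : (Fin d → Fin (m + 1)) → ℝ)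
    (h : ∀ x ∈ Metric.ball x₀ r, ∑ J, c J * ∏ i, x i ^ (J i : ℕ) = 0) : c = 0 := by
  let e : (Fin d → Fin (m + 1)) → (Fin d →₀ ℕ) :=
    fun J => Finsupp.equivFunOnFinite.symm fun i => (J i : ℕ)
  have he : Function.Injective e := by
    intro J K hJK
    funext i
    exact Fin.ext (DFunLike.congr_fun hJK i)
  let P : MvPolynomial (Fin d) ℝ := ∑ J, MvPolynomial.monomial (e J) (c J)
  have hP : P = 0 := by
    refine MvPolynomial.funext_set (fun i => Metric.ball (x₀ i) r)
      (fun i => ?_) fun x hx => ?_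
    · rw [Real.ball_eq_Ioo]
      exact Set.Ioo_infinite (by linarith)
    · rw [← ball_pi x₀ hr] at hx
      have := h x hx
      simpa [P, e, MvPolynomial.eval_monomial, Finsupp.prod_fintype] using this
  funext J
  have hJ : MvPolynomial.coeff (e J) P = 0 := by rw [hP]; simp
  simpa [P, MvPolynomial.coeff_sum, MvPolynomial.coeff_monomial, he.eq_iff] using hJ

theorem exists_smooth_kernel_with_vanishing_moments
    (d mStar : ℕ) (ω : Set (Fin d → ℝ)) (hω : IsOpen ω) (hne : ω.Nonempty) :
    ∃ μ : (Fin d → ℝ) → ℝ,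
      ContDiff ℝ (⊤ : ℕ∞) μ ∧ HasCompactSupport μ ∧ tsupport μ ⊆ ω ∧
      (∫ x, μ x) = 1 ∧
      ∀ I : Fin d → ℕ, 0 < (∑ i, I i) → (∑ i, I i) ≤ mStar →
        (∫ x, (∏ i, x i ^ I i) * μ x) = 0 := by
  obtain ⟨x₀, hx₀⟩ := hne
  obtain ⟨r, hr, hball⟩ := Metric.nhds_basis_closedBall.mem_iff.1 (hω.mem_nhds hx₀)
  let φ : ContDiffBump x₀ := ⟨r / 2, r, by linarith, by linarith⟩
  have hφ : ContDiff ℝ (⊤ : ℕ∞) φ := φ.contDiff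
  let M : (Fin d → Fin (mStar + 1)) → (Fin d → ℝ) → ℝ := fun J x => ∏ i, x i ^ (J i : ℕ)
  have hM : ∀ J, ContDiff ℝ (⊤ : ℕ∞) (M J) := fun J =>
    contDiff_prod fun i _ => (contDiff_apply ℝ ℝ i).pow _
  have hint : ∀ f : (Fin d → ℝ) → ℝ, Continuous f →
      MeasureTheory.Integrable (fun x => f x * φ x) := fun f hf =>
    (hf.mul hφ.continuous).integrable_of_hasCompactSupport φ.hasCompactSupport.mul_left
  let p : ((Fin d → Fin (mStar + 1)) → ℝ) → (Fin d → ℝ) → ℝ := fun c x => ∑ J, c J * M J x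
  have hp : ∀ c, ContDiff ℝ (⊤ : ℕ∞) (p c) := fun c =>
    ContDiff.sum fun J _ => contDiff_const.mul (hM J)
  -- The moment map, sending the coefficients of `p` to the moments of `p φ`.
  let T : ((Fin d → Fin (mStar + 1)) → ℝ) →ₗ[ℝ] ((Fin d → Fin (mStar + 1)) → ℝ) :=
    { toFun := fun c I => ∫ x, (M I x * p c x) * φ x
      map_add' := by
        intro a b
        funext I
        simp only [Pi.add_apply]
        rw [← MeasureTheory.integral_add (hint _ ((hM I).mul (hp a)).continuous)
          (hint _ ((hM I).mul (hp b)).continuous)]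
        congr 1
        funext x
        simp only [p, Pi.add_apply, add_mul, Finset.sum_add_distrib]
        ring
      map_smul' := by
        intro a b
        funext I
        simp only [Pi.smul_apply, smul_eq_mul, RingHom.id_apply]
        rw [← MeasureTheory.integral_const_mul]
        congr 1
        funext x
        simp only [p, Pi.smul_apply, smul_eq_mul, mul_assoc, ← Finset.mul_sum]
        ring }
  have hT : Function.Injective T := by
    rw [injective_iff_map_eq_zero]
    intro c hc
    -- Pairing `T c` with `c` gives the quadratic form `∫ p² φ`.
    have h0 : ∫ x, (p c x * p c x) * φ x = 0 := by
      have h1 : ∑ I, c I * T c I = ∫ x, (p c x * p c x) * φ x := by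
        change ∑ I, c I * ∫ x, (M I x * p c x) * φ x = _
        simp_rw [← MeasureTheory.integral_const_mul]
        rw [← MeasureTheory.integral_finsetSum _ fun I _ =>
          (hint _ ((hM I).mul (hp c)).continuous).const_mul (c I)]
        congr 1
        funext x
        conv_rhs => rw [show p c x * p c x = (∑ J, c J * M J x) * p c x from rfl]
        rw [Finset.sum_mul, Finset.sum_mul]
        exact Finset.sum_congr rfl fun _ _ => by ring
      rw [← h1, hc]
      simp
    have hcont : Continuous fun x => (p c x * p c x) * φ x :=
      ((hp c).continuous.mul (hp c).continuous).mul hφ.continuous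
    have hz : (fun x => (p c x * p c x) * φ x) = 0 := by
      rw [MeasureTheory.integral_eq_zero_iff_of_nonneg
        (fun x => mul_nonneg (mul_self_nonneg _) φ.nonneg)
        (hint _ ((hp c).mul (hp c)).continuous)] at h0
      exact MeasureTheory.Measure.eq_of_ae_eq h0 hcont continuous_zero
    refine coeff_eq_zero_of_vanish_on_ball x₀ hr c fun x hx => ?_
    have := congrFun hz x
    have hpos : 0 < φ x := φ.pos_of_mem_ball hx
    simpa [hpos.ne'] using this
  obtain ⟨c, hc⟩ := (LinearMap.injective_iff_surjective.1 hT) (Pi.single 0 1)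
  have hmom : ∀ I, ∫ x, M I x * (p c x * φ x) = (Pi.single 0 1 : _ → ℝ) I := by
    intro I
    rw [← hc]
    simp only [← mul_assoc]
    rfl
  refine ⟨fun x => p c x * φ x, (hp c).mul hφ, φ.hasCompactSupport.mul_left, ?_, ?_, ?_⟩
  · exact ((tsupport_mul_subset_right).trans φ.tsupport_eq.subset).trans hball
  · simpa [M] using hmom 0
  · intro I hI hle
    have hlt : ∀ i, I i < mStar + 1 := fun i =>
      Nat.lt_succ_of_le ((Finset.single_le_sum (fun _ _ => Nat.zero_le _)
        (Finset.mem_univ i)).trans hle)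
    have hne0 : (fun i => (⟨I i, hlt i⟩ : Fin (mStar + 1))) ≠ 0 := by
      intro h
      have : ∀ i, I i = 0 := fun i => congrArg Fin.val (congrFun h i)
      simp [this] at hI
    simpa [M, Pi.single_eq_of_ne hne0] using hmom fun i => ⟨I i, hlt i⟩
end

section
/- Let n ≥ 2 and k ≥ 0 be integers and let α ∈ (0, 1/2). Then there exists a constant C > 0 such that for every δ ∈ (0, 1], ∫_{[0,1]^3} s₁^{k+α-1} t^{2n-3} / ((δ + s₁ + s₂ + t²)^{k+2} (s₁ + s₂ + t)^{2n-3}) ds₁ ds₂ dt ≤ C δ^{α - 1/2}. -/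
/-!
Since `t ≤ s₁ + s₂ + t`, the factor `(t / (s₁ + s₂ + t)) ^ (2n - 3)` is at most `1`, and with
`A = δ + s₁ + s₂ + t²` the inequality `s₁ ^ k ≤ A ^ k` reduces the integrand to
`s₁ ^ (α - 1) * A ^ (-2)`. The exponent `2` is split as `(α + e) + (1 + e) + (1/2 + e)` with
`e = (1/2 - α) / 3 > 0`, and `A` is bounded below by `δ + s₁`, `δ + s₂`, `δ + t²` in the three
resulting factors (`kernel_le_separable`). The bound is a product of functions of one variable,
each of the form `t ^ a * (δ + t ^ b) ^ (-p)` with `a > -1` and `a - b * p < -1`; by the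
substitution `t ↦ δ ^ (1 / b) t` its integral over the half line is a constant times
`δ ^ ((a + 1) / b - p)` (`integral_profile_scaled`). Here these three powers are all `δ ^ (-e)`,
and `-3 e = α - 1/2`.
-/

open MeasureTheory Set

/-- Convergence at `0` comes from `a > -1`, and at infinity from `a - b * p < -1`. -/
lemma integrableOn_profile {a b p : ℝ} (ha : -1 < a) (hp : 0 ≤ p)
    (h : a - b * p < -1) :
    IntegrableOn (fun t : ℝ => t ^ a * (1 + t ^ b) ^ (-p)) (Ioi 0) := by
  have hmeas : Measurable (fun t : ℝ => t ^ a * (1 + t ^ b) ^ (-p)) := by fun_prop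
  rw [← Ioc_union_Ioi_eq_Ioi zero_le_one]
  refine IntegrableOn.union ?_ ?_
  · have h1 : IntegrableOn (fun t : ℝ => t ^ a) (Ioc 0 1) := by
      rw [← intervalIntegrable_iff_integrableOn_Ioc_of_le zero_le_one]
      exact intervalIntegral.intervalIntegrable_rpow' ha
    refine Integrable.mono' h1 hmeas.aestronglyMeasurable ?_
    refine (ae_restrict_iff' measurableSet_Ioc).2 (Filter.Eventually.of_forall fun t ht => ?_)
    have ht0 : 0 < t := ht.1
    rw [Real.norm_of_nonneg (by positivity)]
    refine mul_le_of_le_one_right (by positivity) ?_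
    exact Real.rpow_le_one_of_one_le_of_nonpos
      (le_add_of_nonneg_right (by positivity)) (by linarith)
  · have h1 : IntegrableOn (fun t : ℝ => t ^ (a - b * p)) (Ioi 1) :=
      integrableOn_Ioi_rpow_of_lt h zero_lt_one
    refine Integrable.mono' h1 hmeas.aestronglyMeasurable ?_
    refine (ae_restrict_iff' measurableSet_Ioi).2 (Filter.Eventually.of_forall fun t ht => ?_)
    have ht0 : 0 < t := zero_lt_one.trans ht
    rw [Real.norm_of_nonneg (by positivity), sub_eq_add_neg, Real.rpow_add ht0, ← mul_neg,
      Real.rpow_mul ht0.le]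
    refine mul_le_mul_of_nonneg_left ?_ (by positivity)
    exact Real.rpow_le_rpow_of_nonpos (by positivity) (by linarith) (by linarith)

/-- Homogeneity of the profile under `t ↦ δ ^ (1 / b) t`. -/
lemma profile_scaling {a b p δ t : ℝ} (hb : 0 < b) (hδ : 0 < δ) (ht : 0 < t) :
    t ^ a * (δ + t ^ b) ^ (-p) =
      δ ^ (a / b - p) * ((δ ^ (-(1 / b)) * t) ^ a * (1 + (δ ^ (-(1 / b)) * t) ^ b) ^ (-p)) := by
  have hpos : 0 < δ ^ (-(1 / b)) := by positivity
  have h1 : (δ ^ (-(1 / b)) * t) ^ b = δ⁻¹ * t ^ b := by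
    rw [Real.mul_rpow hpos.le ht.le, ← Real.rpow_mul hδ.le, ← Real.rpow_neg_one]
    congr 2
    field_simp
  have h2 : δ + t ^ b = δ * (1 + δ⁻¹ * t ^ b) := by field_simp
  have h3 : δ ^ (a / b - p) = δ ^ (a / b) * δ ^ (-p) := by
    rw [← Real.rpow_add hδ, sub_eq_add_neg]
  have h4 : δ ^ (a / b) * (δ ^ (-(1 / b))) ^ a = 1 := by
    rw [← Real.rpow_mul hδ.le, ← Real.rpow_add hδ]
    convert Real.rpow_zero δ using 2
    ring
  rw [h1, h2, Real.mul_rpow hδ.le (by positivity), Real.mul_rpow hpos.le ht.le, h3]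
  linear_combination (-(t ^ a * δ ^ (-p) * (1 + δ⁻¹ * t ^ b) ^ (-p))) * h4

lemma integrableOn_profile_scaled {a b p δ : ℝ} (ha : -1 < a) (hb : 0 < b) (hp : 0 ≤ p)
    (h : a - b * p < -1) (hδ : 0 < δ) :
    IntegrableOn (fun t : ℝ => t ^ a * (δ + t ^ b) ^ (-p)) (Ici 0) := by
  rw [integrableOn_Ici_iff_integrableOn_Ioi]
  have hpos : 0 < δ ^ (-(1 / b)) := by positivity
  refine IntegrableOn.congr_fun (f := fun t => δ ^ (a / b - p) *
    ((δ ^ (-(1 / b)) * t) ^ a * (1 + (δ ^ (-(1 / b)) * t) ^ b) ^ (-p))) ?_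
    (fun t ht => (profile_scaling hb hδ ht).symm) measurableSet_Ioi
  refine Integrable.const_mul ?_ _
  refine (integrableOn_Ioi_comp_mul_left_iff
    (fun t : ℝ => t ^ a * (1 + t ^ b) ^ (-p)) 0 hpos).2 ?_
  rw [mul_zero]
  exact integrableOn_profile ha hp h

lemma integral_profile_scaled {a b p δ : ℝ} (hb : 0 < b) (hδ : 0 < δ) :
    ∫ t in Ici (0 : ℝ), t ^ a * (δ + t ^ b) ^ (-p) =
      δ ^ ((a + 1) / b - p) * ∫ t in Ioi (0 : ℝ), t ^ a * (1 + t ^ b) ^ (-p) := by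
  have hpos : 0 < δ ^ (-(1 / b)) := by positivity
  rw [integral_Ici_eq_integral_Ioi,
    setIntegral_congr_fun measurableSet_Ioi fun t ht => profile_scaling hb hδ ht,
    integral_const_mul,
    integral_comp_mul_left_Ioi (fun t : ℝ => t ^ a * (1 + t ^ b) ^ (-p)) 0 hpos, mul_zero,
    smul_eq_mul, ← mul_assoc, ← Real.rpow_neg hδ.le, ← Real.rpow_add hδ]
  congr 2
  ring

/-- The kernel is dominated by a product of functions of the three separate variables. The
exponents `0` and `1` keep all three factors in the form `t ^ a * (δ + t ^ b) ^ (-p)`. -/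
lemma kernel_le_separable {k : ℕ} {m α δ p q r x y t : ℝ} (hm : 0 ≤ m)
    (hα : α ∈ Ioo (0 : ℝ) (1 / 2)) (hδ : 0 < δ) (hp : 0 ≤ p) (hq : 0 ≤ q) (hr : 0 ≤ r)
    (hpqr : p + q + r = 2) (hx : 0 ≤ x) (hy : 0 ≤ y) (ht : 0 ≤ t) :
    x ^ ((k : ℝ) + α - 1) * t ^ m / ((δ + x + y + t ^ 2) ^ ((k : ℝ) + 2) * (x + y + t) ^ m) ≤
      (x ^ (α - 1) * (δ + x ^ (1 : ℝ)) ^ (-p)) *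
        ((y ^ (0 : ℝ) * (δ + y ^ (1 : ℝ)) ^ (-q)) *
          (t ^ (0 : ℝ) * (δ + t ^ (2 : ℝ)) ^ (-r))) := by
  rcases hx.eq_or_lt with rfl | hx0
  · -- The power of `0` vanishes because its exponent is nonzero: `k + α` is not an integer.
    have hne : (k : ℝ) + α - 1 ≠ 0 := by
      intro h0
      rcases Nat.eq_zero_or_pos k with rfl | hk
      · norm_num at h0
        linarith [hα.2]
      · have : (1 : ℝ) ≤ k := by exact_mod_cast hk
        linarith [hα.1]
    rw [Real.zero_rpow hne, zero_mul, zero_div]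
    positivity
  simp only [Real.rpow_one, Real.rpow_zero, one_mul, Real.rpow_two]
  set A := δ + x + y + t ^ 2 with hA
  have hA0 : 0 < A := by positivity
  have hratio : t ^ m / (x + y + t) ^ m ≤ 1 :=
    div_le_one_of_le₀ (Real.rpow_le_rpow ht (by linarith) hm) (by positivity)
  have hsplit : x ^ ((k : ℝ) + α - 1) = x ^ (k : ℝ) * x ^ (α - 1) := by
    rw [← Real.rpow_add hx0]; congr 1; ring
  have hxk : x ^ (k : ℝ) ≤ A ^ (k : ℝ) :=
    Real.rpow_le_rpow hx (by nlinarith [sq_nonneg t]) (by positivity)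
  have hA2 : (A ^ (2 : ℝ))⁻¹ = A ^ (-p) * (A ^ (-q) * A ^ (-r)) := by
    rw [← Real.rpow_neg hA0.le, ← Real.rpow_add hA0, ← Real.rpow_add hA0]
    congr 1; linarith
  calc x ^ ((k : ℝ) + α - 1) * t ^ m / (A ^ ((k : ℝ) + 2) * (x + y + t) ^ m)
      = (x ^ (k : ℝ) / A ^ (k : ℝ)) * (x ^ (α - 1) * (A ^ (2 : ℝ))⁻¹) *
          (t ^ m / (x + y + t) ^ m) := by
        rw [hsplit, Real.rpow_add hA0]
        simp only [div_eq_mul_inv, mul_inv]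
        ring
    _ ≤ 1 * (x ^ (α - 1) * (A ^ (2 : ℝ))⁻¹) * 1 := by
        gcongr
        exact div_le_one_of_le₀ hxk (by positivity)
    _ = (x ^ (α - 1) * A ^ (-p)) * (A ^ (-q) * A ^ (-r)) := by rw [hA2]; ring
    _ ≤ _ := by
        have h1 : A ^ (-p) ≤ (δ + x) ^ (-p) :=
          Real.rpow_le_rpow_of_nonpos (by positivity) (by nlinarith [sq_nonneg t]) (by linarith)
        have h2 : A ^ (-q) ≤ (δ + y) ^ (-q) :=
          Real.rpow_le_rpow_of_nonpos (by positivity) (by nlinarith [sq_nonneg t]) (by linarith)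
        have h3 : A ^ (-r) ≤ (δ + t ^ 2) ^ (-r) :=
          Real.rpow_le_rpow_of_nonpos (by positivity) (by linarith) (by linarith)
        gcongr

/-- A kernel estimate: for integers `n ≥ 2`, `k ≥ 0` and `α ∈ (0, 1/2)`, there is `C > 0`
such that for all `δ ∈ (0, 1]`,
`∫_{[0,1]^3} s₁^{k+α-1} t^{2n-3} / ((δ+s₁+s₂+t²)^{k+2} (s₁+s₂+t)^{2n-3}) ≤ C δ^{α-1/2}`. -/
theorem kernel_integral_estimate_convex_case
    (n k : ℕ) (hn : 2 ≤ n) (α : ℝ) (hα : α ∈ Set.Ioo (0 : ℝ) (1/2)) :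
    ∃ C > 0, ∀ δ ∈ Set.Ioc (0 : ℝ) 1,
      (∫ p in (Set.Icc (0:ℝ) 1 ×ˢ (Set.Icc (0:ℝ) 1 ×ˢ Set.Icc (0:ℝ) 1)),
        p.1 ^ ((k : ℝ) + α - 1) * p.2.2 ^ (2 * (n : ℝ) - 3) /
          ((δ + p.1 + p.2.1 + p.2.2 ^ 2) ^ ((k : ℝ) + 2) *
            (p.1 + p.2.1 + p.2.2) ^ (2 * (n : ℝ) - 3)))
        ≤ C * δ ^ (α - 1/2) := by
  obtain ⟨e, he⟩ : ∃ e : ℝ, e = (1 / 2 - α) / 3 := ⟨_, rfl⟩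
  have hα0 := hα.1
  have hα1 := hα.2
  have he0 : 0 < e := by rw [he]; linarith
  have hm : (0 : ℝ) ≤ 2 * (n : ℝ) - 3 := by
    have : (2 : ℝ) ≤ n := by exact_mod_cast hn
    linarith
  set K₁ := ∫ t in Ioi (0 : ℝ), t ^ (α - 1) * (1 + t ^ (1 : ℝ)) ^ (-(α + e)) with hK₁
  set K₂ := ∫ t in Ioi (0 : ℝ), t ^ (0 : ℝ) * (1 + t ^ (1 : ℝ)) ^ (-(1 + e)) with hK₂
  set K₃ := ∫ t in Ioi (0 : ℝ), t ^ (0 : ℝ) * (1 + t ^ (2 : ℝ)) ^ (-(1 / 2 + e)) with hK₃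
  -- The absolute value and the summand `1` make positivity of the constant immediate.
  refine ⟨|K₁ * (K₂ * K₃)| + 1, by positivity, ?_⟩
  rintro δ ⟨hδ, -⟩
  have hf := integrableOn_profile_scaled (a := α - 1) (b := 1) (p := α + e)
    (by linarith) one_pos (by linarith) (by linarith) hδ
  have hg := integrableOn_profile_scaled (a := 0) (b := 1) (p := 1 + e)
    (by linarith) one_pos (by linarith) (by linarith) hδ
  have hh := integrableOn_profile_scaled (a := 0) (b := 2) (p := 1 / 2 + e)
    (by linarith) two_pos (by linarith) (by linarith) hδ
  have If := integral_profile_scaled (a := α - 1) (b := 1) (p := α + e) one_pos hδ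
  have Ig := integral_profile_scaled (a := 0) (b := 1) (p := 1 + e) one_pos hδ
  have Ih := integral_profile_scaled (a := 0) (b := 2) (p := 1 / 2 + e) two_pos hδ
  rw [← hK₁] at If
  rw [← hK₂] at Ig
  rw [← hK₃] at Ih
  set f : ℝ → ℝ := fun t => t ^ (α - 1) * (δ + t ^ (1 : ℝ)) ^ (-(α + e)) with hfdef
  set g : ℝ → ℝ := fun t => t ^ (0 : ℝ) * (δ + t ^ (1 : ℝ)) ^ (-(1 + e)) with hgdef
  set h : ℝ → ℝ := fun t => t ^ (0 : ℝ) * (δ + t ^ (2 : ℝ)) ^ (-(1 / 2 + e)) with hhdef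
  have hG : IntegrableOn (fun z : ℝ × ℝ × ℝ => f z.1 * (g z.2.1 * h z.2.2))
      (Ici 0 ×ˢ (Ici 0 ×ˢ Ici 0)) := by
    unfold IntegrableOn
    rw [Measure.volume_eq_prod, Measure.volume_eq_prod, ← Measure.prod_restrict,
      ← Measure.prod_restrict]
    exact hf.mul_prod (hg.mul_prod hh)
  have hIG : ∫ z in (Ici (0 : ℝ) ×ˢ (Ici (0 : ℝ) ×ˢ Ici (0 : ℝ))),
      f z.1 * (g z.2.1 * h z.2.2) = (∫ t in Ici 0, f t) *
        ((∫ t in Ici 0, g t) * ∫ t in Ici 0, h t) := by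
    rw [Measure.volume_eq_prod, setIntegral_prod_mul f (fun w : ℝ × ℝ => g w.1 * h w.2),
      Measure.volume_eq_prod, setIntegral_prod_mul g h]
  have hsub : Icc (0 : ℝ) 1 ×ˢ (Icc (0 : ℝ) 1 ×ˢ Icc (0 : ℝ) 1) ⊆
      Ici 0 ×ˢ (Ici 0 ×ˢ Ici 0) :=
    prod_mono Icc_subset_Ici_self (prod_mono Icc_subset_Ici_self Icc_subset_Ici_self)
  have hmI : MeasurableSet (Icc (0 : ℝ) 1 ×ˢ (Icc (0 : ℝ) 1 ×ˢ Icc (0 : ℝ) 1)) :=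
    measurableSet_Icc.prod (measurableSet_Icc.prod measurableSet_Icc)
  have hmJ : MeasurableSet (Ici (0 : ℝ) ×ˢ (Ici (0 : ℝ) ×ˢ Ici (0 : ℝ))) :=
    measurableSet_Ici.prod (measurableSet_Ici.prod measurableSet_Ici)
  have hpow : δ ^ ((α - 1 + 1) / 1 - (α + e)) * (δ ^ (((0 : ℝ) + 1) / 1 - (1 + e)) *
      δ ^ (((0 : ℝ) + 1) / 2 - (1 / 2 + e))) = δ ^ (α - 1 / 2) := by
    rw [← Real.rpow_add hδ, ← Real.rpow_add hδ]
    congr 1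
    rw [he]; ring
  calc _ ≤ ∫ z in (Icc (0 : ℝ) 1 ×ˢ (Icc (0 : ℝ) 1 ×ˢ Icc (0 : ℝ) 1)),
        f z.1 * (g z.2.1 * h z.2.2) := by
        refine integral_mono_of_nonneg ?_ (hG.mono_set hsub) ?_
        · refine (ae_restrict_iff' hmI).2 (Filter.Eventually.of_forall ?_)
          rintro ⟨x, y, t⟩ ⟨⟨hx, -⟩, ⟨hy, -⟩, ht, -⟩
          simp only at hx hy ht
          simp only [Pi.zero_apply]
          positivity
        · refine (ae_restrict_iff' hmI).2 (Filter.Eventually.of_forall ?_)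
          rintro ⟨x, y, t⟩ ⟨⟨hx, -⟩, ⟨hy, -⟩, ht, -⟩
          exact kernel_le_separable hm hα hδ (by linarith) (by linarith) (by linarith)
            (by rw [he]; ring) hx hy ht
    _ ≤ ∫ z in (Ici (0 : ℝ) ×ˢ (Ici (0 : ℝ) ×ˢ Ici (0 : ℝ))), f z.1 * (g z.2.1 * h z.2.2) := by
        refine setIntegral_mono_set hG ?_ hsub.eventuallyLE
        refine (ae_restrict_iff' hmJ).2 (Filter.Eventually.of_forall ?_)
        rintro ⟨x, y, t⟩ ⟨hx, hy, ht⟩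
        simp only [mem_Ici] at hx hy ht
        simp only [Pi.zero_apply, hfdef, hgdef, hhdef]
        positivity
    _ = K₁ * (K₂ * K₃) * δ ^ (α - 1 / 2) := by
        rw [hIG, If, Ig, Ih, ← hpow]; ring
    _ ≤ _ := by
        gcongr
        exact (le_abs_self _).trans (by linarith)
end

section
/- Let n ≥ 2 and k ≥ 0 be integers and let α ∈ [1/2, 1]. Then there exists a constant C > 0 such that for every δ ∈ (0, 1], ∫_{[0,1]^3} s₁^{k+α-1} t^{2n-3} / ((δ + s₁ + s₂ + t²)^{k+3} (s₁ + s₂ + t)^{2n-3}) ds₁ ds₂ dt ≤ C δ^{α - 3/2}. -/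
open MeasureTheory Set

/-!
Since `t ≤ s₁ + s₂ + t`, the factor `(t / (s₁ + s₂ + t)) ^ (2n-3)` is at most `1`, and since
`s₁ ≤ D := δ + s₁ + s₂ + t²`, the factor `(s₁ / D) ^ k` is at most `1` as well. What remains is
`s₁ ^ (α-1) / D ^ 3`. Split `3 = 9/8 + 9/8 + 3/4` and use `D ≥ δ + s₁`, `D ≥ δ + s₂` and
`2 D ≥ (√δ + t)²` on the three factors (`integrand_le`): the integrand is dominated by a product
of three functions `s ↦ s ^ (β-1) * (ε + s) ^ (-a)` with `0 < β < a`. By scaling, the integral of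
such a function over `(0, ∞)` is `ε ^ (β-a)` times a finite constant (`integral_betaKernel`).
The total power of `δ` is `(α - 9/8) + (1 - 9/8) + (1 - 3/2) / 2 = α - 3/2`.
-/

/-- The one-variable kernel `s ^ (β-1) * (ε + s) ^ (-a)`, a rescaled integrand of the Beta
function `B(β, a - β)`. -/
noncomputable def betaKernel (β a ε s : ℝ) : ℝ := s ^ (β - 1) * (ε + s) ^ (-a)

lemma betaKernel_nonneg {β a ε s : ℝ} (hε : 0 < ε) (hs : 0 ≤ s) : 0 ≤ betaKernel β a ε s := by
  unfold betaKernel; positivity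

lemma measurable_betaKernel (β a ε : ℝ) : Measurable (betaKernel β a ε) := by
  unfold betaKernel; fun_prop

/-- Near `0` the kernel is dominated by a multiple of `s ^ (β-1)`, near `∞` by `s ^ (β-1-a)`. -/
lemma integrableOn_betaKernel {β a ε : ℝ} (hβ : 0 < β) (ha : β < a) (hε : 0 < ε) :
    IntegrableOn (betaKernel β a ε) (Ioi 0) := by
  rw [← Ioc_union_Ioi_eq_Ioi (zero_le_one' ℝ)]
  refine IntegrableOn.union ?_ ?_
  · have h : IntegrableOn (fun s : ℝ => s ^ (β - 1) * ε ^ (-a)) (Ioc 0 1) := by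
      have := (intervalIntegral.intervalIntegrable_rpow' (a := 0) (b := 1)
        (r := β - 1) (by linarith))
      rw [intervalIntegrable_iff_integrableOn_Ioc_of_le zero_le_one] at this
      exact this.mul_const _
    refine Integrable.mono' h (measurable_betaKernel _ _ _).aestronglyMeasurable ?_
    filter_upwards [ae_restrict_mem measurableSet_Ioc] with s hs
    rw [Real.norm_of_nonneg (betaKernel_nonneg hε hs.1.le)]
    unfold betaKernel
    have h0 := hs.1
    exact mul_le_mul_of_nonneg_left
      (Real.rpow_le_rpow_of_nonpos hε (by linarith) (by linarith)) (by positivity)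
  · have h := integrableOn_Ioi_rpow_of_lt (a := β - 1 - a) (by linarith) (zero_lt_one' ℝ)
    refine Integrable.mono' h (measurable_betaKernel _ _ _).aestronglyMeasurable ?_
    filter_upwards [ae_restrict_mem measurableSet_Ioi] with s hs
    have h0 : (0 : ℝ) < s := lt_trans one_pos hs
    rw [Real.norm_of_nonneg (betaKernel_nonneg hε h0.le)]
    unfold betaKernel
    rw [sub_eq_add_neg (β - 1) a, Real.rpow_add h0]
    exact mul_le_mul_of_nonneg_left
      (Real.rpow_le_rpow_of_nonpos h0 (by linarith) (by linarith)) (by positivity)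

/-- Substitute `s = ε u`. -/
lemma integral_betaKernel {β a ε : ℝ} (hε : 0 < ε) :
    ∫ s in Ioi 0, betaKernel β a ε s = ε ^ (β - a) * ∫ s in Ioi 0, betaKernel β a 1 s := by
  have h := integral_comp_mul_left_Ioi (betaKernel β a ε) 0 hε
  rw [mul_zero, smul_eq_mul, eq_inv_mul_iff_mul_eq₀ hε.ne'] at h
  rw [← h, ← integral_const_mul, ← integral_const_mul]
  refine setIntegral_congr_fun measurableSet_Ioi fun s hs => ?_
  have h0 : (0 : ℝ) < s := hs
  have e : ε + ε * s = ε * (1 + s) := by ring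
  have e2 : ε ^ (β - a) = ε * (ε ^ (β - 1) * ε ^ (-a)) := by
    nth_rewrite 2 [← Real.rpow_one ε]
    rw [← Real.rpow_add hε, ← Real.rpow_add hε]
    congr 1; ring
  simp only [betaKernel]
  rw [e, Real.mul_rpow hε.le h0.le, Real.mul_rpow hε.le (by positivity), e2]
  ring

lemma integrableOn_Icc_betaKernel {β a ε : ℝ} (hβ : 0 < β) (ha : β < a) (hε : 0 < ε) :
    IntegrableOn (betaKernel β a ε) (Icc 0 1) := by
  rw [integrableOn_Icc_iff_integrableOn_Ioc]
  exact (integrableOn_betaKernel hβ ha hε).mono_set Ioc_subset_Ioi_self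

lemma integral_Icc_betaKernel_le {β a ε : ℝ} (hβ : 0 < β) (ha : β < a) (hε : 0 < ε) :
    ∫ s in Icc 0 1, betaKernel β a ε s ≤ ε ^ (β - a) * ∫ s in Ioi 0, betaKernel β a 1 s := by
  rw [← integral_betaKernel hε, integral_Icc_eq_integral_Ioc]
  refine setIntegral_mono_set (integrableOn_betaKernel hβ ha hε) ?_
    Ioc_subset_Ioi_self.eventuallyLE
  filter_upwards [ae_restrict_mem measurableSet_Ioi] with s hs
  exact betaKernel_nonneg hε (le_of_lt hs)

/-- The pointwise domination. The constant `2` absorbs `2 ^ (3/4)`. -/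
lemma integrand_le {k : ℕ} {m α δ x y t : ℝ} (hm : 0 ≤ m) (hα : 0 < α) (hδ : 0 < δ)
    (hx : 0 ≤ x) (hy : 0 ≤ y) (ht : 0 ≤ t) :
    x ^ ((k : ℝ) + α - 1) * t ^ m / ((δ + x + y + t ^ 2) ^ ((k : ℝ) + 3) * (x + y + t) ^ m)
      ≤ 2 * (betaKernel α (9/8) δ x *
          (betaKernel 1 (9/8) δ y * betaKernel 1 (3/2) (√δ) t)) := by
  set D := δ + x + y + t ^ 2 with hD
  have hD0 : 0 < D := by positivity
  have hsq : 0 < √δ := Real.sqrt_pos.2 hδ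
  have hs2 : √δ ^ 2 = δ := Real.sq_sqrt hδ.le
  have h1 : t ^ m / (x + y + t) ^ m ≤ 1 :=
    div_le_one_of_le₀ (Real.rpow_le_rpow ht (by linarith) hm) (by positivity)
  have h2 : x ^ ((k : ℝ) + α - 1) ≤ x ^ (α - 1) * D ^ (k : ℝ) := by
    -- `x = 0` is separate because `rpow` is not additive in the exponent there
    rcases hx.eq_or_lt with rfl | hx
    · rcases Nat.eq_zero_or_pos k with rfl | hk
      · simp
      · have : (1 : ℝ) ≤ k := by exact_mod_cast hk
        rw [Real.zero_rpow (by linarith)]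
        positivity
    · rw [show (k : ℝ) + α - 1 = (α - 1) + k by ring, Real.rpow_add hx]
      refine mul_le_mul_of_nonneg_left
        (Real.rpow_le_rpow hx.le ?_ (by positivity)) (by positivity)
      nlinarith [sq_nonneg t]
  have h3 : D ^ ((k : ℝ) + 3) = D ^ (k : ℝ) * (D ^ (9/8 : ℝ) * (D ^ (9/8 : ℝ) * D ^ (3/4 : ℝ))) := by
    rw [← Real.rpow_add hD0, ← Real.rpow_add hD0, ← Real.rpow_add hD0]
    norm_num
  have hX : D ^ (-(9/8) : ℝ) ≤ (δ + x) ^ (-(9/8) : ℝ) :=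
    Real.rpow_le_rpow_of_nonpos (by positivity) (by nlinarith [sq_nonneg t]) (by norm_num)
  have hY : D ^ (-(9/8) : ℝ) ≤ (δ + y) ^ (-(9/8) : ℝ) :=
    Real.rpow_le_rpow_of_nonpos (by positivity) (by nlinarith [sq_nonneg t]) (by norm_num)
  have hT : D ^ (-(3/4) : ℝ) ≤ 2 * (√δ + t) ^ (-(3/2) : ℝ) := by
    have e : (√δ + t) ^ (-(3/2) : ℝ) = ((√δ + t) ^ 2) ^ (-(3/4) : ℝ) := by
      rw [← Real.rpow_natCast, ← Real.rpow_mul (by positivity)]; norm_num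
    have hle : (√δ + t) ^ 2 ≤ 2 * D := by nlinarith [sq_nonneg (√δ - t)]
    have h4 : (2 * D) ^ (-(3/4) : ℝ) ≤ ((√δ + t) ^ 2) ^ (-(3/4) : ℝ) :=
      Real.rpow_le_rpow_of_nonpos (by positivity) hle (by norm_num)
    rw [Real.mul_rpow (by norm_num) hD0.le] at h4
    have h5 : (2 : ℝ) ^ (-1 : ℝ) ≤ 2 ^ (-(3/4) : ℝ) :=
      Real.rpow_le_rpow_of_exponent_le (by norm_num) (by norm_num)
    rw [Real.rpow_neg_one] at h5
    rw [e]
    have h6 : 0 ≤ D ^ (-(3/4) : ℝ) := by positivity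
    nlinarith [mul_le_mul_of_nonneg_right h5 h6]
  calc _ = x ^ ((k : ℝ) + α - 1) / D ^ ((k : ℝ) + 3) * (t ^ m / (x + y + t) ^ m) := by
        rw [mul_div_mul_comm]
    _ ≤ x ^ ((k : ℝ) + α - 1) / D ^ ((k : ℝ) + 3) := mul_le_of_le_one_right (by positivity) h1
    _ ≤ x ^ (α - 1) * D ^ (k : ℝ) / D ^ ((k : ℝ) + 3) := by gcongr
    _ = x ^ (α - 1) * (D ^ (-(9/8) : ℝ) * (D ^ (-(9/8) : ℝ) * D ^ (-(3/4) : ℝ))) := by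
        rw [h3, Real.rpow_neg hD0.le, Real.rpow_neg hD0.le]
        field_simp
    _ ≤ x ^ (α - 1) * ((δ + x) ^ (-(9/8) : ℝ) *
          ((δ + y) ^ (-(9/8) : ℝ) * (2 * (√δ + t) ^ (-(3/2) : ℝ)))) := by gcongr
    _ = _ := by
        simp only [betaKernel, sub_self, Real.rpow_zero]
        ring

theorem kernel_integral_estimate_convex_case'
    (n k : ℕ) (hn : 2 ≤ n) (α : ℝ) (hα : α ∈ Set.Icc (1/2 : ℝ) 1) :
    ∃ C > 0, ∀ δ ∈ Set.Ioc (0 : ℝ) 1,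
      (∫ p in (Set.Icc (0:ℝ) 1 ×ˢ (Set.Icc (0:ℝ) 1 ×ˢ Set.Icc (0:ℝ) 1)),
        p.1 ^ ((k : ℝ) + α - 1) * p.2.2 ^ (2 * (n : ℝ) - 3) /
          ((δ + p.1 + p.2.1 + p.2.2 ^ 2) ^ ((k : ℝ) + 3) *
            (p.1 + p.2.1 + p.2.2) ^ (2 * (n : ℝ) - 3)))
        ≤ C * δ ^ (α - 3/2) := by
  obtain ⟨hα1, hα2⟩ := hα
  have hα0 : 0 < α := by linarith
  have hαa : α < 9/8 := by linarith
  have hm : (0 : ℝ) ≤ 2 * (n : ℝ) - 3 := by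
    have : (2 : ℝ) ≤ n := by exact_mod_cast hn
    linarith
  have hK (β a : ℝ) : 0 ≤ ∫ s in Ioi 0, betaKernel β a 1 s :=
    setIntegral_nonneg measurableSet_Ioi fun s hs => betaKernel_nonneg one_pos (le_of_lt hs)
  set K₁ := ∫ s in Ioi 0, betaKernel α (9/8) 1 s
  set K₂ := ∫ s in Ioi 0, betaKernel 1 (9/8) 1 s
  set K₃ := ∫ s in Ioi 0, betaKernel 1 (3/2) 1 s
  have hK₁ : 0 ≤ K₁ := hK _ _
  have hK₂ : 0 ≤ K₂ := hK _ _
  have hK₃ : 0 ≤ K₃ := hK _ _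
  -- adding `1` makes positivity of the constant immediate
  refine ⟨2 * (K₁ * (K₂ * K₃)) + 1, by positivity, fun δ hδ => ?_⟩
  have hδ0 : 0 < δ := hδ.1
  have hsq : 0 < √δ := Real.sqrt_pos.2 hδ0
  have i1 := integrableOn_Icc_betaKernel hα0 hαa hδ0
  have i2 := integrableOn_Icc_betaKernel (β := 1) (a := 9/8) one_pos (by norm_num) hδ0
  have i3 := integrableOn_Icc_betaKernel (β := 1) (a := 3/2) one_pos (by norm_num) hsq
  have b1 := integral_Icc_betaKernel_le hα0 hαa hδ0
  have b2 := integral_Icc_betaKernel_le (β := 1) (a := 9/8) one_pos (by norm_num) hδ0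
  have b3 := integral_Icc_betaKernel_le (β := 1) (a := 3/2) one_pos (by norm_num) hsq
  have hI (β a : ℝ) {ε : ℝ} (hε : 0 < ε) : 0 ≤ ∫ s in Icc 0 1, betaKernel β a ε s :=
    setIntegral_nonneg measurableSet_Icc fun s hs => betaKernel_nonneg hε hs.1
  have hpow : δ ^ (α - 9/8) * (δ ^ (1 - 9/8 : ℝ) * √δ ^ (1 - 3/2 : ℝ)) = δ ^ (α - 3/2) := by
    rw [Real.sqrt_eq_rpow, ← Real.rpow_mul hδ0.le, ← Real.rpow_add hδ0, ← Real.rpow_add hδ0]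
    congr 1; ring
  have hmeas : MeasurableSet (Icc (0:ℝ) 1 ×ˢ (Icc (0:ℝ) 1 ×ˢ Icc (0:ℝ) 1)) :=
    measurableSet_Icc.prod (measurableSet_Icc.prod measurableSet_Icc)
  calc _ ≤ ∫ p in (Icc (0:ℝ) 1 ×ˢ (Icc (0:ℝ) 1 ×ˢ Icc (0:ℝ) 1)),
        2 * (betaKernel α (9/8) δ p.1 *
          (betaKernel 1 (9/8) δ p.2.1 * betaKernel 1 (3/2) (√δ) p.2.2)) := by
        refine integral_mono_of_nonneg ?_ ?_ ?_
        · filter_upwards [ae_restrict_mem hmeas] with p hp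
          obtain ⟨⟨h1, _⟩, ⟨h2, _⟩, h3, _⟩ := hp
          simp only [Pi.zero_apply]
          positivity
        · rw [Measure.volume_eq_prod, Measure.volume_eq_prod, ← Measure.prod_restrict,
            ← Measure.prod_restrict]
          exact (i1.mul_prod (i2.mul_prod i3)).const_mul 2
        · filter_upwards [ae_restrict_mem hmeas] with p hp
          exact integrand_le hm hα0 hδ0 hp.1.1 hp.2.1.1 hp.2.2.1
    _ = 2 * ((∫ s in Icc 0 1, betaKernel α (9/8) δ s) *
          ((∫ s in Icc 0 1, betaKernel 1 (9/8) δ s) *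
            ∫ s in Icc 0 1, betaKernel 1 (3/2) (√δ) s)) := by
        rw [integral_const_mul, Measure.volume_eq_prod, setIntegral_prod_mul
          (betaKernel α (9/8) δ) (fun q : ℝ × ℝ => betaKernel 1 (9/8) δ q.1 *
            betaKernel 1 (3/2) (√δ) q.2), Measure.volume_eq_prod, setIntegral_prod_mul]
    _ ≤ 2 * ((δ ^ (α - 9/8) * K₁) * ((δ ^ (1 - 9/8 : ℝ) * K₂) * (√δ ^ (1 - 3/2 : ℝ) * K₃))) := by
        have := hI 1 (9/8) hδ0
        have := hI 1 (3/2) hsq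
        gcongr
    _ = 2 * (K₁ * (K₂ * K₃)) * δ ^ (α - 3/2) := by rw [← hpow]; ring
    _ ≤ _ := by
        gcongr
        linarith
end

section
/- Let β ∈ (-1, ∞), μ₁ ∈ [0, ∞), λ ∈ [0, μ₁], and m ∈ [0, ∞), and set β' := β - (μ₁ + λ - 3)/2. If β' < 0, then there exists a constant C > 0 such that for every δ ∈ (0, 1), ∫_{[0,1]^3} s₁^β (δ + s₁ + s₂ + t²)^{-1-μ₁} t^m (δ + s₁ + s₂ + t)^{-(m + λ - μ₁)} ds₁ ds₂ dt ≤ C δ^{β'}. -/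
/-!
The proof bounds the integrand by a product of functions of one variable each.

Write `X = δ + s₁ + s₂ + t²` and `Y = δ + s₁ + s₂ + t`. Since `t ≤ Y` and `m ≥ 0`,
`t^m Y^{-(m+λ-μ₁)} ≤ Y^{μ₁-λ}`. On the unit cube `δ + s₁ + s₂ ≤ 3` gives `Y² ≤ 6 X`, and
`μ₁ - λ ≥ 0`, so the integrand is at most a constant times `s₁^β X^{-G}` with
`G = 1 + (μ₁+λ)/2`. The hypothesis `β' < 0` says `G = β + 5/2 + 3ε` with `ε = -β'/3 > 0`.
Splitting `G = (β+1+ε) + (1+ε) + (1+2ε)/2` and using that `X` dominates each of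
`δ + s₁`, `δ + s₂` and `(√δ + t)²/2`, one is left with three integrals of the form
`∫ s^a (d+s)^{-g}` with `a > -1` and `g > a + 1`, which by scaling are a constant times
`d^{a+1-g}` (`integral_rpow_mul_add_rpow`). The three powers of `δ` are
`δ^{-ε} δ^{-ε} (√δ)^{-2ε} = δ^{β'}`.
-/

open MeasureTheory Set

lemma integrableOn_rpow_mul_one_add_rpow {a g : ℝ} (ha : -1 < a) (hg : a + 1 < g) :
    IntegrableOn (fun s : ℝ => s ^ a * (1 + s) ^ (-g)) (Ioi 0) := by
  have hmeas : Measurable (fun s : ℝ => s ^ a * (1 + s) ^ (-g)) := by fun_prop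
  rw [← Ioc_union_Ioi_eq_Ioi (zero_le_one (α := ℝ))]
  refine IntegrableOn.union ?_ ?_
  · have h1 : IntegrableOn (fun s : ℝ => s ^ a) (Ioc 0 1) :=
      (intervalIntegrable_iff_integrableOn_Ioc_of_le zero_le_one).1
        (intervalIntegral.intervalIntegrable_rpow' ha)
    refine Integrable.mono' h1 hmeas.aestronglyMeasurable ?_
    filter_upwards [ae_restrict_mem measurableSet_Ioc] with s hs
    have hs0 : 0 < s := hs.1
    rw [Real.norm_of_nonneg (by positivity)]
    have : (1 + s) ^ (-g) ≤ 1 :=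
      Real.rpow_le_one_of_one_le_of_nonpos (by linarith) (by linarith)
    exact mul_le_of_le_one_right (by positivity) this
  · have h1 : IntegrableOn (fun s : ℝ => s ^ (a - g)) (Ioi 1) :=
      integrableOn_Ioi_rpow_of_lt (by linarith) one_pos
    refine Integrable.mono' h1 hmeas.aestronglyMeasurable ?_
    filter_upwards [ae_restrict_mem measurableSet_Ioi] with s hs
    have hs0 : 0 < s := one_pos.trans hs
    rw [Real.norm_of_nonneg (by positivity), sub_eq_add_neg, Real.rpow_add hs0]
    gcongr ?_ * ?_
    exact Real.rpow_le_rpow_of_nonpos hs0 (by linarith) (by linarith)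

/-- The change of variables `s = d u` that makes the `d`-dependence of `∫ s^a (d+s)^{-g}`
explicit. -/
lemma rpow_mul_add_rpow_eq {a g d s : ℝ} (hd : 0 < d) (hs : 0 < s) :
    s ^ a * (d + s) ^ (-g) =
      d ^ (a - g) * ((d⁻¹ * s) ^ a * (1 + d⁻¹ * s) ^ (-g)) := by
  have h2 : 1 + d⁻¹ * s = d⁻¹ * (d + s) := by field_simp
  rw [h2, Real.mul_rpow (by positivity) hs.le, Real.mul_rpow (by positivity) (by positivity),
    Real.inv_rpow hd.le, Real.inv_rpow hd.le, Real.rpow_neg hd.le, sub_eq_add_neg,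
    Real.rpow_add hd, Real.rpow_neg hd.le]
  have := Real.rpow_pos_of_pos hd a
  have := Real.rpow_pos_of_pos hd g
  field_simp

lemma integrableOn_rpow_mul_add_rpow {a g d : ℝ} (ha : -1 < a) (hg : a + 1 < g) (hd : 0 < d) :
    IntegrableOn (fun s : ℝ => s ^ a * (d + s) ^ (-g)) (Ioi 0) := by
  have h := (integrableOn_Ioi_comp_mul_left_iff
    (fun s : ℝ => s ^ a * (1 + s) ^ (-g)) 0 (inv_pos.2 hd)).2
      (by simpa using integrableOn_rpow_mul_one_add_rpow ha hg)
  refine IntegrableOn.congr_fun (h.const_mul (d ^ (a - g))) (fun s hs => ?_) measurableSet_Ioi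
  exact (rpow_mul_add_rpow_eq hd hs).symm

lemma integral_rpow_mul_add_rpow {a g d : ℝ} (hd : 0 < d) :
    ∫ s in Ioi (0 : ℝ), s ^ a * (d + s) ^ (-g) =
      (∫ s in Ioi (0 : ℝ), s ^ a * (1 + s) ^ (-g)) * d ^ (a + 1 - g) := by
  rw [setIntegral_congr_fun measurableSet_Ioi (fun s hs => rpow_mul_add_rpow_eq hd hs),
    integral_const_mul,
    integral_comp_mul_left_Ioi (fun s : ℝ => s ^ a * (1 + s) ^ (-g)) 0 (inv_pos.2 hd)]
  have : d ^ (a + 1 - g) = d ^ (a - g) * d := by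
    rw [show a + 1 - g = a - g + 1 by ring, Real.rpow_add_one hd.ne']
  rw [this]
  simp
  ring

lemma integrableOn_Icc_rpow_mul_add_rpow {a g d : ℝ} (ha : -1 < a) (hg : a + 1 < g)
    (hd : 0 < d) : IntegrableOn (fun s : ℝ => s ^ a * (d + s) ^ (-g)) (Icc 0 1) :=
  (integrableOn_Icc_iff_integrableOn_Ioc).2
    ((integrableOn_rpow_mul_add_rpow ha hg hd).mono_set Ioc_subset_Ioi_self)

lemma setIntegral_Icc_rpow_mul_add_rpow_le {a g : ℝ} (ha : -1 < a) (hg : a + 1 < g) :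
    ∃ C > 0, ∀ d > 0, 0 ≤ ∫ s in Icc (0 : ℝ) 1, s ^ a * (d + s) ^ (-g) ∧
      ∫ s in Icc (0 : ℝ) 1, s ^ a * (d + s) ^ (-g) ≤ C * d ^ (a + 1 - g) := by
  have hK : 0 ≤ ∫ s in Ioi (0 : ℝ), s ^ a * (1 + s) ^ (-g) := by
    refine setIntegral_nonneg measurableSet_Ioi fun s hs => ?_
    have : 0 < s := hs
    positivity
  refine ⟨(∫ s in Ioi (0 : ℝ), s ^ a * (1 + s) ^ (-g)) + 1, by linarith, fun d hd => ⟨?_, ?_⟩⟩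
  · refine setIntegral_nonneg measurableSet_Icc fun s hs => ?_
    have : 0 ≤ s := hs.1
    positivity
  · rw [integral_Icc_eq_integral_Ioc]
    calc _ ≤ ∫ s in Ioi (0 : ℝ), s ^ a * (d + s) ^ (-g) := by
          refine setIntegral_mono_set (integrableOn_rpow_mul_add_rpow ha hg hd) ?_
            (Filter.Eventually.of_forall Ioc_subset_Ioi_self)
          filter_upwards [ae_restrict_mem measurableSet_Ioi] with s hs
          have : 0 < s := hs
          simp only [Pi.zero_apply]
          positivity
      _ ≤ _ := by
          rw [integral_rpow_mul_add_rpow hd]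
          gcongr
          linarith

/-- The factors depending on `μ₁`, `λ` and `m` reduce to a single power of
`X = δ + s₁ + s₂ + t²`; here `r` stands for `δ + s₁ + s₂`. -/
lemma kernel_le {μ₁ lam m r t : ℝ} (hlam : lam ≤ μ₁) (hm : 0 ≤ m)
    (hr : 0 < r) (hr3 : r ≤ 3) (ht : 0 ≤ t) :
    (r + t ^ 2) ^ (-1 - μ₁) * t ^ m * (r + t) ^ (-(m + lam - μ₁)) ≤
      6 ^ ((μ₁ - lam) / 2) * (r + t ^ 2) ^ (-(1 + (μ₁ + lam) / 2)) := by
  have hX : 0 < r + t ^ 2 := by positivity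
  have hY : 0 < r + t := by positivity
  have h1 : t ^ m * (r + t) ^ (-(m + lam - μ₁)) ≤ (r + t) ^ (μ₁ - lam) := by
    calc _ ≤ (r + t) ^ m * (r + t) ^ (-(m + lam - μ₁)) := by
          gcongr
          linarith
      _ = _ := by rw [← Real.rpow_add hY]; congr 1; ring
  have h2 : (r + t) ^ (μ₁ - lam) ≤ 6 ^ ((μ₁ - lam) / 2) * (r + t ^ 2) ^ ((μ₁ - lam) / 2) := by
    rw [← Real.mul_rpow (by norm_num) hX.le]
    calc (r + t) ^ (μ₁ - lam) = ((r + t) ^ 2) ^ ((μ₁ - lam) / 2) := by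
          rw [← Real.rpow_natCast_mul hY.le]; congr 1; push_cast; ring
      _ ≤ _ := by
          apply Real.rpow_le_rpow (by positivity) _ (by linarith)
          nlinarith [sq_nonneg (r - t), mul_nonneg hr.le (sub_nonneg.2 hr3)]
  calc _ = (r + t ^ 2) ^ (-1 - μ₁) * (t ^ m * (r + t) ^ (-(m + lam - μ₁))) := by ring
    _ ≤ (r + t ^ 2) ^ (-1 - μ₁) *
        (6 ^ ((μ₁ - lam) / 2) * (r + t ^ 2) ^ ((μ₁ - lam) / 2)) := by
        exact mul_le_mul_of_nonneg_left (h1.trans h2) (by positivity)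
    _ = 6 ^ ((μ₁ - lam) / 2) *
        ((r + t ^ 2) ^ (-1 - μ₁) * (r + t ^ 2) ^ ((μ₁ - lam) / 2)) := by ring
    _ = _ := by rw [← Real.rpow_add hX]; congr 2; ring

/-- Separation of variables: a negative power of `δ + x + y + t²` is split between its three
lower bounds `δ + x`, `δ + y` and `(√δ + t)² / 2`. -/
lemma split_le {g₁ g₂ g₃ δ x y t : ℝ} (h1 : 0 ≤ g₁) (h2 : 0 ≤ g₂) (h3 : 0 ≤ g₃)
    (hδ : 0 < δ) (hx : 0 ≤ x) (hy : 0 ≤ y) (ht : 0 ≤ t) :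
    (δ + x + y + t ^ 2) ^ (-(g₁ + g₂ + g₃ / 2)) ≤
      2 ^ (g₃ / 2) * ((δ + x) ^ (-g₁) * ((δ + y) ^ (-g₂) * (√δ + t) ^ (-g₃))) := by
  have hX : 0 < δ + x + y + t ^ 2 := by positivity
  have hd : 0 < √δ := Real.sqrt_pos.2 hδ
  have hdt : 0 < √δ + t := by positivity
  have e3 : (δ + x + y + t ^ 2) ^ (-(g₃ / 2)) ≤ 2 ^ (g₃ / 2) * (√δ + t) ^ (-g₃) := by
    calc _ ≤ ((√δ + t) ^ 2 / 2) ^ (-(g₃ / 2)) := by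
          apply Real.rpow_le_rpow_of_nonpos (by positivity) _ (by linarith)
          nlinarith [Real.sq_sqrt hδ.le, sq_nonneg (√δ - t)]
      _ = _ := by
          rw [Real.div_rpow (by positivity) (by norm_num), ← Real.rpow_natCast_mul hdt.le,
            Real.rpow_neg zero_le_two, div_inv_eq_mul, mul_comm]
          congr 2; push_cast; ring
  have e1 : (δ + x + y + t ^ 2) ^ (-g₁) ≤ (δ + x) ^ (-g₁) :=
    Real.rpow_le_rpow_of_nonpos (by positivity) (by nlinarith) (by linarith)
  have e2 : (δ + x + y + t ^ 2) ^ (-g₂) ≤ (δ + y) ^ (-g₂) :=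
    Real.rpow_le_rpow_of_nonpos (by positivity) (by nlinarith) (by linarith)
  calc _ = (δ + x + y + t ^ 2) ^ (-g₁) * ((δ + x + y + t ^ 2) ^ (-g₂) *
        (δ + x + y + t ^ 2) ^ (-(g₃ / 2))) := by
        rw [← Real.rpow_add hX, ← Real.rpow_add hX]; congr 1; ring
    _ ≤ (δ + x) ^ (-g₁) * ((δ + y) ^ (-g₂) * (2 ^ (g₃ / 2) * (√δ + t) ^ (-g₃))) := by
        gcongr
    _ = _ := by ring

/-- Lemma 6.2-type estimate (case `β' < 0`): with `β' = β - (μ₁ + λ - 3)/2 < 0`, there is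
`C > 0` such that for all `δ ∈ (0,1)`,
`∫_{[0,1]^3} s₁^β (δ+s₁+s₂+t²)^{-1-μ₁} t^m (δ+s₁+s₂+t)^{-(m+λ-μ₁)} ≤ C δ^{β'}`. -/
theorem henkin_integral_estimate_negative_exponent
    (β μ₁ lam m : ℝ) (hβ : -1 < β) (hμ₁ : 0 ≤ μ₁) (hlam : lam ∈ Set.Icc 0 μ₁) (hm : 0 ≤ m)
    (hβ' : β - (μ₁ + lam - 3) / 2 < 0) :
    ∃ C > 0, ∀ δ ∈ Set.Ioo (0 : ℝ) 1,
      (∫ p in (Set.Icc (0:ℝ) 1 ×ˢ (Set.Icc (0:ℝ) 1 ×ˢ Set.Icc (0:ℝ) 1)),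
        p.1 ^ β * (δ + p.1 + p.2.1 + p.2.2 ^ 2) ^ (-1 - μ₁) * p.2.2 ^ m *
          (δ + p.1 + p.2.1 + p.2.2) ^ (-(m + lam - μ₁)))
        ≤ C * δ ^ (β - (μ₁ + lam - 3) / 2) := by
  obtain ⟨ε, hε⟩ : ∃ ε, ε = -(β - (μ₁ + lam - 3) / 2) / 3 := ⟨_, rfl⟩
  have hε0 : 0 < ε := by rw [hε]; linarith
  obtain ⟨C₁, hC₁, H₁⟩ := setIntegral_Icc_rpow_mul_add_rpow_le (a := β) (g := β + 1 + ε)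
    hβ (by linarith)
  obtain ⟨C₂, hC₂, H₂⟩ := setIntegral_Icc_rpow_mul_add_rpow_le (a := 0) (g := 1 + ε)
    (by norm_num) (by linarith)
  obtain ⟨C₃, hC₃, H₃⟩ := setIntegral_Icc_rpow_mul_add_rpow_le (a := 0) (g := 1 + 2 * ε)
    (by norm_num) (by linarith)
  obtain ⟨K, hK⟩ : ∃ K : ℝ, K = 6 ^ ((μ₁ - lam) / 2) * 2 ^ ((1 + 2 * ε) / 2) := ⟨_, rfl⟩
  have hK0 : 0 < K := by rw [hK]; positivity
  refine ⟨K * (C₁ * (C₂ * C₃)), by positivity, fun δ hδ => ?_⟩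
  have hδ0 : 0 < δ := hδ.1
  have hd : 0 < √δ := Real.sqrt_pos.2 hδ0
  have I₁ := integrableOn_Icc_rpow_mul_add_rpow (a := β) (g := β + 1 + ε) hβ (by linarith) hδ0
  have I₂ := integrableOn_Icc_rpow_mul_add_rpow (a := 0) (g := 1 + ε)
    (by norm_num) (by linarith) hδ0
  have I₃ := integrableOn_Icc_rpow_mul_add_rpow (a := 0) (g := 1 + 2 * ε)
    (by norm_num) (by linarith) hd
  obtain ⟨N₁, B₁⟩ := H₁ δ hδ0
  obtain ⟨N₂, B₂⟩ := H₂ δ hδ0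
  obtain ⟨N₃, B₃⟩ := H₃ _ hd
  have hmeas : MeasurableSet (Icc (0:ℝ) 1 ×ˢ (Icc (0:ℝ) 1 ×ˢ Icc (0:ℝ) 1)) :=
    measurableSet_Icc.prod (measurableSet_Icc.prod measurableSet_Icc)
  have hvol : (volume : Measure (ℝ × ℝ × ℝ)).restrict
      (Icc (0:ℝ) 1 ×ˢ (Icc (0:ℝ) 1 ×ˢ Icc (0:ℝ) 1)) =
      (volume.restrict (Icc 0 1)).prod
        ((volume.restrict (Icc 0 1)).prod (volume.restrict (Icc 0 1))) := by
    rw [Measure.prod_restrict, Measure.prod_restrict]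
    rfl
  calc _ ≤ ∫ p in (Icc (0:ℝ) 1 ×ˢ (Icc (0:ℝ) 1 ×ˢ Icc (0:ℝ) 1)),
        K * ((p.1 ^ β * (δ + p.1) ^ (-(β + 1 + ε))) *
          ((p.2.1 ^ (0:ℝ) * (δ + p.2.1) ^ (-(1 + ε))) *
            (p.2.2 ^ (0:ℝ) * (√δ + p.2.2) ^ (-(1 + 2 * ε))))) := by
        refine integral_mono_of_nonneg ?_ ?_ ?_
        · filter_upwards [ae_restrict_mem hmeas] with p hp
          obtain ⟨⟨hx, -⟩, ⟨hy, -⟩, ht, -⟩ := hp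
          simp only [Pi.zero_apply]
          positivity
        · rw [hvol]
          exact (I₁.mul_prod (I₂.mul_prod I₃)).const_mul K
        · filter_upwards [ae_restrict_mem hmeas] with p hp
          obtain ⟨⟨hx, hx1⟩, ⟨hy, hy1⟩, ht, -⟩ := hp
          have k1 := kernel_le (r := δ + p.1 + p.2.1) hlam.2 hm (by positivity)
            (by linarith [hδ.2]) ht
          have k2 := split_le (g₁ := β + 1 + ε) (g₂ := 1 + ε) (g₃ := 1 + 2 * ε)
            (by linarith) (by linarith) (by linarith) hδ0 hx hy ht
          rw [show β + 1 + ε + (1 + ε) + (1 + 2 * ε) / 2 = 1 + (μ₁ + lam) / 2 by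
            rw [hε]; ring] at k2
          simp only [Real.rpow_zero, one_mul, hK]
          calc _ = p.1 ^ β * ((δ + p.1 + p.2.1 + p.2.2 ^ 2) ^ (-1 - μ₁) * p.2.2 ^ m *
                (δ + p.1 + p.2.1 + p.2.2) ^ (-(m + lam - μ₁))) := by ring
            _ ≤ p.1 ^ β * (6 ^ ((μ₁ - lam) / 2) * _) :=
                mul_le_mul_of_nonneg_left
                  (k1.trans (mul_le_mul_of_nonneg_left k2 (by positivity))) (by positivity)
            _ = _ := by ring
    _ = K * ((∫ s in Icc (0 : ℝ) 1, s ^ β * (δ + s) ^ (-(β + 1 + ε))) *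
          ((∫ s in Icc (0 : ℝ) 1, s ^ (0:ℝ) * (δ + s) ^ (-(1 + ε))) *
            (∫ s in Icc (0 : ℝ) 1, s ^ (0:ℝ) * (√δ + s) ^ (-(1 + 2 * ε))))) := by
        rw [hvol, integral_const_mul, ← integral_prod_mul, ← integral_prod_mul]
    _ ≤ K * ((C₁ * δ ^ (β + 1 - (β + 1 + ε))) * ((C₂ * δ ^ (0 + 1 - (1 + ε))) *
          (C₃ * √δ ^ (0 + 1 - (1 + 2 * ε))))) := by
        gcongr
    _ = K * (C₁ * (C₂ * C₃)) *
          (δ ^ (β + 1 - (β + 1 + ε)) * δ ^ (0 + 1 - (1 + ε)) *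
            √δ ^ (0 + 1 - (1 + 2 * ε))) := by ring
    _ = _ := by
        rw [Real.sqrt_eq_rpow, ← Real.rpow_mul hδ0.le, ← Real.rpow_add hδ0,
          ← Real.rpow_add hδ0]
        congr 2
        rw [hε]
        ring
end

section
/- Let β ∈ (-1, ∞), μ₁ ∈ [0, ∞), λ ∈ [0, μ₁], and m ∈ [0, ∞), and set β' := β - (μ₁ + λ - 3)/2. If β' > 0, then there exists a constant C > 0 such that for every δ ∈ (0, 1), ∫_{[0,1]^3} s₁^β (δ + s₁ + s₂ + t²)^{-1-μ₁} t^m (δ + s₁ + s₂ + t)^{-(m + λ - μ₁)} ds₁ ds₂ dt ≤ C. -/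
/-!
Write `A = δ + s₁ + s₂ + t²` and `B = δ + s₁ + s₂ + t`. Since `t ≤ B`, the factor `t ^ m * B ^ (-m)`
is at most `1`, and since `A ≤ 4`, `B ≤ A + √A ≤ 3 √A`. As `μ₁ - λ ≥ 0`, the integrand is therefore
at most `3 ^ (μ₁ - λ) * s₁ ^ β * A ^ (-E)` with `E = 1 + (μ₁ + λ) / 2`. The hypothesis `β' > 0` says
exactly that `E < β + 5 / 2 = (β + 1) + 1 + 1 / 2`, so `E = θ (β + 1) + θ + θ / 2` for some
`θ ∈ (0, 1)`. Using `A ≥ s₁`, `A ≥ s₂`, `A ≥ t²` on the three parts of the exponent bounds the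
integrand, uniformly in `δ`, by a constant times `s₁ ^ (β - θ (β + 1)) * s₂ ^ (-θ) * t ^ (-θ)`.
All three exponents exceed `-1`, so this product is integrable on the unit cube.
-/

open MeasureTheory

/-- The `δ`-independent bound of the integrand by a product of powers of the three variables; `hθE`
splits the exponent `1 + (μ₁ + lam) / 2` into the shares of `x`, `y` and `t ^ 2`. -/
lemma henkin_pointwise_bound {β μ₁ lam m θ δ x y t : ℝ} (hβ : -1 < β) (hlam : lam ≤ μ₁)
    (hm : 0 ≤ m) (hθ : 0 < θ) (hθE : θ * (β + 1) + θ + θ / 2 = 1 + (μ₁ + lam) / 2)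
    (hδ : 0 < δ) (hδ1 : δ < 1) (hx : 0 < x) (hx1 : x ≤ 1) (hy : 0 < y) (hy1 : y ≤ 1)
    (ht : 0 < t) (ht1 : t ≤ 1) :
    x ^ β * (δ + x + y + t ^ 2) ^ (-1 - μ₁) * t ^ m * (δ + x + y + t) ^ (-(m + lam - μ₁))
      ≤ 3 ^ (μ₁ - lam) * (x ^ (β - θ * (β + 1)) * (y ^ (-θ) * t ^ (-θ))) := by
  have ht2 : 0 < t ^ 2 := by positivity
  set A := δ + x + y + t ^ 2 with hA
  set B := δ + x + y + t with hB
  have hA0 : 0 < A := by positivity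
  have hB0 : 0 < B := by positivity
  have hA4 : A ≤ 4 := by nlinarith
  have hs0 : 0 ≤ √A := Real.sqrt_nonneg A
  have hs2 : √A ≤ 2 := by
    rw [Real.sqrt_le_left (by norm_num)]; linarith
  have hss : √A * √A = A := Real.mul_self_sqrt hA0.le
  have hts : t ≤ √A := Real.le_sqrt_of_sq_le (by linarith)
  have hB3 : B ≤ 3 * √A := by nlinarith
  have h1 : t ^ m * B ^ (-m) ≤ 1 := by
    rw [Real.rpow_neg hB0.le, ← div_eq_mul_inv]
    exact div_le_one_of_le₀ (Real.rpow_le_rpow ht.le (by linarith) hm) (by positivity)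
  have h2 : B ^ (μ₁ - lam) ≤ 3 ^ (μ₁ - lam) * A ^ ((μ₁ - lam) / 2) := by
    refine (Real.rpow_le_rpow hB0.le hB3 (by linarith)).trans_eq ?_
    rw [Real.mul_rpow (by norm_num) hs0, Real.sqrt_eq_rpow, ← Real.rpow_mul hA0.le]
    congr 2; ring
  have h3 : A ^ (-1 - μ₁) * A ^ ((μ₁ - lam) / 2)
      = A ^ (-(θ * (β + 1))) * (A ^ (-θ) * A ^ (-(θ / 2))) := by
    rw [← Real.rpow_add hA0, ← Real.rpow_add hA0, ← Real.rpow_add hA0]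
    congr 1; linarith
  have hx' : A ^ (-(θ * (β + 1))) ≤ x ^ (-(θ * (β + 1))) :=
    Real.rpow_le_rpow_of_nonpos hx (by linarith) (by nlinarith)
  have hy' : A ^ (-θ) ≤ y ^ (-θ) :=
    Real.rpow_le_rpow_of_nonpos hy (by linarith) (by linarith)
  have ht' : A ^ (-(θ / 2)) ≤ t ^ (-θ) := by
    refine (Real.rpow_le_rpow_of_nonpos ht2 (by linarith) (by linarith)).trans_eq ?_
    rw [← Real.rpow_natCast, ← Real.rpow_mul ht.le]
    congr 1; push_cast; ring
  have hxs : x ^ (β - θ * (β + 1)) = x ^ β * x ^ (-(θ * (β + 1))) := by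
    rw [← Real.rpow_add hx]; rfl
  have hBs : B ^ (-(m + lam - μ₁)) = B ^ (-m) * B ^ (μ₁ - lam) := by
    rw [← Real.rpow_add hB0]; congr 1; ring
  calc x ^ β * A ^ (-1 - μ₁) * t ^ m * B ^ (-(m + lam - μ₁))
      = x ^ β * A ^ (-1 - μ₁) * ((t ^ m * B ^ (-m)) * B ^ (μ₁ - lam)) := by rw [hBs]; ring
    _ ≤ x ^ β * A ^ (-1 - μ₁) * (1 * (3 ^ (μ₁ - lam) * A ^ ((μ₁ - lam) / 2))) := by gcongr
    _ = 3 ^ (μ₁ - lam) * (x ^ β * (A ^ (-1 - μ₁) * A ^ ((μ₁ - lam) / 2))) := by ring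
    _ = 3 ^ (μ₁ - lam) * (x ^ β * (A ^ (-(θ * (β + 1))) * (A ^ (-θ) * A ^ (-(θ / 2))))) := by
        rw [h3]
    _ ≤ 3 ^ (μ₁ - lam) * (x ^ β * (x ^ (-(θ * (β + 1))) * (y ^ (-θ) * t ^ (-θ)))) := by gcongr
    _ = _ := by rw [hxs]; ring

lemma integrable_rpow_Ioc {a : ℝ} (ha : -1 < a) :
    Integrable (fun x : ℝ => x ^ a) (volume.restrict (Set.Ioc 0 1)) :=
  (intervalIntegrable_iff_integrableOn_Ioc_of_le zero_le_one).1
    (intervalIntegral.intervalIntegrable_rpow' ha)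

/-- Passing to half-open intervals discards the faces `s₁ = 0`, `s₂ = 0`, `t = 0`, where a
negative power of `0` would take its conventional value in `Real.rpow` and the bound may fail. -/
lemma volume_restrict_cube :
    (volume : Measure (ℝ × ℝ × ℝ)).restrict
        (Set.Icc (0:ℝ) 1 ×ˢ (Set.Icc (0:ℝ) 1 ×ˢ Set.Icc (0:ℝ) 1))
      = volume.restrict (Set.Ioc (0:ℝ) 1 ×ˢ (Set.Ioc (0:ℝ) 1 ×ˢ Set.Ioc (0:ℝ) 1)) := by
  simp only [Measure.volume_eq_prod, ← Measure.prod_restrict]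
  rw [restrict_Ioc_eq_restrict_Icc]

theorem henkin_integral_estimate_positive_exponent
    (β μ₁ lam m : ℝ) (hβ : -1 < β) (hμ₁ : 0 ≤ μ₁) (hlam : lam ∈ Set.Icc 0 μ₁) (hm : 0 ≤ m)
    (hβ' : 0 < β - (μ₁ + lam - 3) / 2) :
    ∃ C > 0, ∀ δ ∈ Set.Ioo (0 : ℝ) 1,
      (∫ p in (Set.Icc (0:ℝ) 1 ×ˢ (Set.Icc (0:ℝ) 1 ×ˢ Set.Icc (0:ℝ) 1)),
        p.1 ^ β * (δ + p.1 + p.2.1 + p.2.2 ^ 2) ^ (-1 - μ₁) * p.2.2 ^ m *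
          (δ + p.1 + p.2.1 + p.2.2) ^ (-(m + lam - μ₁)))
        ≤ C := by
  obtain ⟨hl0, hl1⟩ := hlam
  have hb : 0 < β + 5 / 2 := by linarith
  obtain ⟨θ, hθ⟩ : ∃ θ, θ = (1 + (μ₁ + lam) / 2) / (β + 5 / 2) := ⟨_, rfl⟩
  have hθ0 : 0 < θ := by rw [hθ]; positivity
  have hθ1 : θ < 1 := by rw [hθ, div_lt_one hb]; linarith
  have hθE : θ * (β + 1) + θ + θ / 2 = 1 + (μ₁ + lam) / 2 := by
    rw [eq_div_iff hb.ne'] at hθ; linarith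
  let g : ℝ × ℝ × ℝ → ℝ := fun p =>
    3 ^ (μ₁ - lam) * (p.1 ^ (β - θ * (β + 1)) * (p.2.1 ^ (-θ) * p.2.2 ^ (-θ)))
  have hg : Integrable g
      (volume.restrict (Set.Ioc (0:ℝ) 1 ×ˢ (Set.Ioc (0:ℝ) 1 ×ˢ Set.Ioc (0:ℝ) 1))) := by
    simp only [Measure.volume_eq_prod, ← Measure.prod_restrict]
    have h1 := integrable_rpow_Ioc (a := β - θ * (β + 1)) (by nlinarith)
    have h2 := integrable_rpow_Ioc (a := -θ) (by linarith)
    exact (h1.mul_prod (h2.mul_prod h2)).const_mul _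
  have hmeas : MeasurableSet (Set.Ioc (0:ℝ) 1 ×ˢ (Set.Ioc (0:ℝ) 1 ×ˢ Set.Ioc (0:ℝ) 1)) :=
    measurableSet_Ioc.prod (measurableSet_Ioc.prod measurableSet_Ioc)
  refine ⟨max 1 (∫ p in (Set.Ioc (0:ℝ) 1 ×ˢ (Set.Ioc (0:ℝ) 1 ×ˢ Set.Ioc (0:ℝ) 1)), g p),
    by positivity, fun δ hδ => le_max_of_le_right ?_⟩
  obtain ⟨hδ0, hδ1⟩ := hδ
  rw [volume_restrict_cube]
  refine integral_mono_of_nonneg ?_ hg ?_ <;>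
    filter_upwards [ae_restrict_mem hmeas] with p hp <;>
    obtain ⟨⟨hx, hx1⟩, ⟨hy, hy1⟩, ht, ht1⟩ := hp
  · simp only [Pi.zero_apply]
    positivity
  · exact henkin_pointwise_bound hβ hl1 hm hθ0 hθE hδ0 hδ1 hx hx1 hy hy1 ht ht1
end

section
/- Let μ : ℝ^d → ℝ be a continuously differentiable function with compact support, and let a ∈ (0, 1]. Let f : ℝ^d → ℝ be bounded, continuous, and Hölder continuous with exponent a and constant K on all of ℝ^d. For t > 0 define S^t f(x) := ∫_{ℝ^d} f(x - t·y) μ(y) dy. Then S^t f is differentiable on ℝ^d and for every x, the operator norm of its derivative satisfies ‖D(S^t f)(x)‖ ≤ K · t^{a-1} · ∫_{ℝ^d} ‖y‖^a ‖Dμ(y)‖ dy. -/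
open MeasureTheory

/-!
The function `S^t f` is the convolution `μ ⋆ f(t ·)` evaluated at `t⁻¹ x`, so it may be
differentiated by letting the derivative fall on `μ`. For a fixed point `x`, subtracting the
constant `f x` from `f` changes `S^t f` only by the constant `f x * ∫ μ`; hence
`D(S^t f)(x) = t⁻¹ ∫ (f (x - t y) - f x) Dμ(y) dy`, which is `hasFDerivAt_moser_smoothing`.
(This encodes the cancellation `∫ Dμ = 0`.) The Hölder bound `|f (x - t y) - f x| ≤ K t^a ‖y‖^a`
under the integral gives the estimate.
-/

/-- The derivative of the smoothing operator, with the increment of `f` at the base point in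
place of `f` itself. -/
lemma hasFDerivAt_moser_smoothing {d : ℕ}
    {μ : EuclideanSpace ℝ (Fin d) → ℝ} (hμ : ContDiff ℝ 1 μ) (hμs : HasCompactSupport μ)
    {f : EuclideanSpace ℝ (Fin d) → ℝ} (hfc : Continuous f) {t : ℝ} (ht : t ≠ 0)
    (x : EuclideanSpace ℝ (Fin d)) :
    HasFDerivAt (fun z => ∫ y, f (z - t • y) * μ y)
      (t⁻¹ • ∫ y, (f (x - t • y) - f x) • fderiv ℝ μ y) x := by
  let g : EuclideanSpace ℝ (Fin d) → ℝ := fun z => f (t • z) - f x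
  have hg : Continuous g := by fun_prop
  have hconv := hμs.hasFDerivAt_convolution_left (ContinuousLinearMap.mul ℝ ℝ) hμ
    (hg.locallyIntegrable (μ := volume)) (t⁻¹ • x)
  have hscale : HasFDerivAt (fun z : EuclideanSpace ℝ (Fin d) => t⁻¹ • z)
      (t⁻¹ • ContinuousLinearMap.id ℝ _) x := (hasFDerivAt_id x).const_smul t⁻¹
  -- The added constant compensates for having subtracted `f x` in `g`.
  have hcomp := (hconv.comp x hscale).add_const (f x * ∫ y, μ y)
  have harg (z y : EuclideanSpace ℝ (Fin d)) : t • (t⁻¹ • z - y) = z - t • y := by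
    rw [smul_sub, smul_inv_smul₀ ht]
  refine (hcomp.congr_fderiv ?_).congr_of_eventuallyEq (Filter.Eventually.of_forall fun z => ?_)
  · rw [ContinuousLinearMap.comp_smul, ContinuousLinearMap.comp_id]
    congr 1
    refine integral_congr_ae (Filter.Eventually.of_forall fun y => ?_)
    ext v
    simp [g, harg, ContinuousLinearMap.precompL_apply, mul_comm]
    ring
  · have h1 : Integrable (fun y => f (z - t • y) * μ y) :=
      Continuous.integrable_of_hasCompactSupport (by have := hμ.continuous; fun_prop)
        hμs.mul_left
    have h2 : Integrable (fun y => f x * μ y) :=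
      (hμ.continuous.integrable_of_hasCompactSupport hμs).const_mul _
    have h3 : (convolution μ g (ContinuousLinearMap.mul ℝ ℝ) volume) (t⁻¹ • z)
        = ∫ y, (f (z - t • y) * μ y - f x * μ y) := by
      refine integral_congr_ae (Filter.Eventually.of_forall fun y => ?_)
      simp only [g, harg, ContinuousLinearMap.mul_apply']
      ring
    simp only [Function.comp_apply]
    rw [h3, integral_sub h1 h2, integral_const_mul]
    ring

/-- Derivative estimate for the Moser smoothing operator: if `μ` is `C¹` with compact
support and `f` is bounded, continuous and `a`-Hölder with constant `K`, then
`S^t f(x) = ∫ f(x - t y) μ(y) dy` is differentiable with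
`‖D(S^t f)(x)‖ ≤ K t^{a-1} ∫ ‖y‖^a ‖Dμ(y)‖ dy`. -/
theorem moser_smoothing_derivative_estimate
    (d : ℕ) (a : ℝ) (ha : a ∈ Set.Ioc (0 : ℝ) 1)
    (μ : EuclideanSpace ℝ (Fin d) → ℝ)
    (hμ : ContDiff ℝ 1 μ) (hμs : HasCompactSupport μ)
    (f : EuclideanSpace ℝ (Fin d) → ℝ) (B : ℝ) (hfB : ∀ x, |f x| ≤ B)
    (hfc : Continuous f)
    (K : ℝ) (hf : ∀ x y, |f x - f y| ≤ K * ‖x - y‖ ^ a)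
    (t : ℝ) (ht : 0 < t) :
    Differentiable ℝ (fun x => ∫ y, f (x - t • y) * μ y) ∧
    ∀ x, ‖fderiv ℝ (fun x => ∫ y, f (x - t • y) * μ y) x‖ ≤
      K * t ^ (a - 1) * ∫ y, ‖y‖ ^ a * ‖fderiv ℝ μ y‖ := by
  have hD := fun x => hasFDerivAt_moser_smoothing hμ hμs hfc ht.ne' x
  refine ⟨fun x => (hD x).differentiableAt, fun x => ?_⟩
  have hint : Integrable fun y => ‖y‖ ^ a * ‖fderiv ℝ μ y‖ := by
    have hc : Continuous (fderiv ℝ μ) := hμ.continuous_fderiv one_ne_zero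
    refine Continuous.integrable_of_hasCompactSupport ?_ (hμs.fderiv ℝ).norm.mul_left
    exact (continuous_norm.rpow_const fun _ => Or.inr ha.1.le).mul hc.norm
  have hbound : ‖∫ y, (f (x - t • y) - f x) • fderiv ℝ μ y‖ ≤
      ∫ y, K * t ^ a * (‖y‖ ^ a * ‖fderiv ℝ μ y‖) := by
    refine norm_integral_le_of_norm_le (hint.const_mul _) (Filter.Eventually.of_forall fun y => ?_)
    have h := hf (x - t • y) x
    rw [sub_sub_cancel_left, norm_neg, norm_smul, Real.norm_of_nonneg ht.le,
      Real.mul_rpow ht.le (norm_nonneg y)] at h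
    rw [norm_smul, Real.norm_eq_abs]
    calc _ ≤ K * (t ^ a * ‖y‖ ^ a) * ‖fderiv ℝ μ y‖ := by gcongr
      _ = _ := by ring
  rw [(hD x).fderiv, norm_smul, Real.norm_of_nonneg (inv_nonneg.2 ht.le)]
  calc _ ≤ t⁻¹ * ∫ y, K * t ^ a * (‖y‖ ^ a * ‖fderiv ℝ μ y‖) := by gcongr
    _ = _ := by
      rw [integral_const_mul, Real.rpow_sub_one ht.ne']
      ring
end

section
/- Let m ≥ 1 be an integer and let μ : ℝ^d → ℝ be a smooth function with compact support such that ∫_{ℝ^d} μ(y) dy = 1 and ∫_{ℝ^d} y^I μ(y) dy = 0 for every multi-index I with 1 ≤ |I| ≤ m - 1. Let f : ℝ^d → ℝ be a C^m function with ‖D^m f(x)‖ ≤ K for all x ∈ ℝ^d, where D^m f denotes the m-th iterated Fréchet derivative. Then for every t > 0 and every x ∈ ℝ^d, |∫_{ℝ^d} f(x - t·y) μ(y) dy - f(x)| ≤ (K · t^m / m!) · ∫_{ℝ^d} ‖y‖^m |μ(y)| dy. -/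
/-!
Expand `f` at `x` by Taylor's formula of order `m` with integral remainder
(`map_add_eq_sum_add_integral_iteratedFDeriv`), with increment `-t y`, multiply by `μ y` and
integrate in `y`. The zeroth term contributes `f x` because `∫ μ = 1`. A term of order
`1 ≤ k ≤ m - 1` is a homogeneous polynomial of degree `k` in the coordinates of `y`, so it
integrates to zero by the moment conditions (`integral_multilinear_diag_mul_eq_zero`). What is
left is the integral of the remainder against `μ`, and the remainder is at most
`K ‖t y‖ ^ m / m!` pointwise (`abs_sub_taylor_le`). Every integrand is continuous with compact
support, hence integrable.
-/

open MeasureTheory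

/-- Restricting a `k`-linear form to the diagonal and expanding in the standard basis gives a
combination of the monomials `∏ j, y (r j)` with `r : Fin k → Fin d`; the exponent of `y i` in
such a monomial is the cardinality of the fibre of `r` over `i`, and these add up to `k`. -/
lemma integral_multilinear_diag_mul_eq_zero {d k : ℕ}
    {μ : EuclideanSpace ℝ (Fin d) → ℝ} (hμ : Continuous μ) (hμs : HasCompactSupport μ)
    (hmom : ∀ I : Fin d → ℕ, (∑ i, I i) = k → (∫ y, (∏ i, y i ^ I i) * μ y) = 0)
    (L : ContinuousMultilinearMap ℝ (fun _ : Fin k => EuclideanSpace ℝ (Fin d)) ℝ) :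
    (∫ y, L (fun _ => y) * μ y) = 0 := by
  classical
  let e : Fin d → EuclideanSpace ℝ (Fin d) := fun i => EuclideanSpace.basisFun (Fin d) ℝ i
  have hL : ∀ y : EuclideanSpace ℝ (Fin d), L (fun _ => y) =
      ∑ r : Fin k → Fin d, (∏ j, y (r j)) * L (fun j => e (r j)) := by
    intro y
    have hy : y = ∑ i, y i • e i := by
      simpa [e] using ((EuclideanSpace.basisFun (Fin d) ℝ).sum_repr y).symm
    conv_lhs => rw [hy]
    rw [L.map_sum (fun (_ : Fin k) (i : Fin d) => y i • e i)]
    refine Finset.sum_congr rfl fun r _ => ?_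
    rw [L.map_smul_univ (fun j => y (r j)) (fun j => e (r j)), smul_eq_mul]
  have hprod : ∀ (r : Fin k → Fin d) (y : EuclideanSpace ℝ (Fin d)),
      ∏ j, y (r j) = ∏ i, y i ^ (Finset.univ.filter fun j => r j = i).card := by
    intro r y
    rw [← Finset.prod_fiberwise' Finset.univ r (fun i => y i)]
    simp
  have hterm : ∀ r : Fin k → Fin d, (∫ y : EuclideanSpace ℝ (Fin d), (∏ j, y (r j)) * μ y) = 0 := by
    intro r
    simp_rw [hprod r]
    apply hmom
    rw [← Finset.card_eq_sum_card_fiberwise (f := r) (fun _ _ => Finset.mem_coe.2 (Finset.mem_univ _))]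
    simp
  have hrw : ∀ y : EuclideanSpace ℝ (Fin d), L (fun _ => y) * μ y =
      ∑ r : Fin k → Fin d, L (fun j => e (r j)) * ((∏ j, y (r j)) * μ y) := by
    intro y
    rw [hL, Finset.sum_mul]
    exact Finset.sum_congr rfl fun r _ => by ring
  simp_rw [hrw]
  rw [integral_finsetSum]
  · simp_rw [integral_const_mul, hterm]
    simp
  · intro r _
    refine (Continuous.integrable_of_hasCompactSupport ?_ hμs.mul_left).const_mul _
    fun_prop

/-- The Taylor remainder of order `n + 1`, estimated by integrating
`(1 - s) ^ n * K * ‖h‖ ^ (n + 1)` over `[0, 1]`. -/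
lemma abs_sub_taylor_le {E : Type*} [NormedAddCommGroup E] [NormedSpace ℝ E] {n : ℕ}
    {f : E → ℝ} (hf : ContDiff ℝ (n + 1 : ℕ) f) {K : ℝ}
    (hK : ∀ x, ‖iteratedFDeriv ℝ (n + 1) f x‖ ≤ K) (x h : E) :
    |f (x + h) - ∑ k ∈ Finset.range (n + 1),
      (k.factorial : ℝ)⁻¹ * iteratedFDeriv ℝ k f x (fun _ => h)| ≤
      K * ‖h‖ ^ (n + 1) / (n + 1).factorial := by
  have hT := map_add_eq_sum_add_integral_iteratedFDeriv (f := f) (x := x) (y := h) (n := n)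
    (fun s _ => by exact_mod_cast hf.contDiffAt)
  simp only [smul_eq_mul] at hT
  rw [hT, add_sub_cancel_left, abs_mul, abs_of_nonneg (by positivity)]
  have hint : (∫ s in (0 : ℝ)..1, (1 - s) ^ n * (K * ‖h‖ ^ (n + 1))) =
      K * ‖h‖ ^ (n + 1) / (n + 1) := by
    rw [intervalIntegral.integral_mul_const,
      intervalIntegral.integral_comp_sub_left (fun s : ℝ => s ^ n) 1, integral_pow]
    simp
    ring
  have hb : ‖∫ s in (0 : ℝ)..1,
      (1 - s) ^ n * iteratedFDeriv ℝ (n + 1) f (x + s • h) (fun _ => h)‖ ≤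
      K * ‖h‖ ^ (n + 1) / (n + 1) := by
    rw [← hint]
    refine intervalIntegral.norm_integral_le_of_norm_le zero_le_one ?_
      (Continuous.intervalIntegrable (by fun_prop) _ _)
    refine Filter.Eventually.of_forall fun s hs => ?_
    have h1 : 0 ≤ 1 - s := by linarith [hs.2]
    rw [norm_mul, norm_pow, Real.norm_of_nonneg h1]
    gcongr
    refine (ContinuousMultilinearMap.le_opNorm _ _).trans ?_
    simp only [Finset.prod_const, Finset.card_univ, Fintype.card_fin]
    gcongr
    exact hK _
  rw [Real.norm_eq_abs] at hb
  refine (mul_le_mul_of_nonneg_left hb (by positivity)).trans_eq ?_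
  rw [Nat.factorial_succ]
  push_cast
  field_simp

/-- Higher order approximation for the Moser smoothing operator: if `μ` is smooth with
compact support, `∫ μ = 1`, and all moments of order `1 ≤ |I| ≤ m-1` vanish, and `f` is
`C^m` with `‖D^m f‖ ≤ K` everywhere, then
`|∫ f(x - t y) μ(y) dy - f(x)| ≤ (K t^m / m!) ∫ ‖y‖^m |μ(y)| dy`. -/
theorem moser_smoothing_higher_order_approximation
    (d m : ℕ) (hm : 1 ≤ m)
    (μ : EuclideanSpace ℝ (Fin d) → ℝ)
    (hμ : ContDiff ℝ (⊤ : ℕ∞) μ) (hμs : HasCompactSupport μ)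
    (hμ1 : (∫ y, μ y) = 1)
    (hμmom : ∀ I : Fin d → ℕ, 1 ≤ (∑ i, I i) → (∑ i, I i) ≤ m - 1 →
      (∫ y, (∏ i, y i ^ I i) * μ y) = 0)
    (f : EuclideanSpace ℝ (Fin d) → ℝ) (hfC : ContDiff ℝ m f)
    (K : ℝ) (hfK : ∀ x, ‖iteratedFDeriv ℝ m f x‖ ≤ K)
    (t : ℝ) (ht : 0 < t) (x : EuclideanSpace ℝ (Fin d)) :
    |(∫ y, f (x - t • y) * μ y) - f x| ≤
      K * t ^ m / (Nat.factorial m) * ∫ y, ‖y‖ ^ m * |μ y| := by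
  obtain ⟨n, rfl⟩ : ∃ n, m = n + 1 := ⟨m - 1, by omega⟩
  have hμc : Continuous μ := hμ.continuous
  have hfc : Continuous f := hfC.continuous
  have hI : ∀ g : EuclideanSpace ℝ (Fin d) → ℝ, Continuous g →
      Integrable (fun y => g y * μ y) := fun g hg =>
    (hg.mul hμc).integrable_of_hasCompactSupport hμs.mul_left
  -- `T y` is the Taylor polynomial of `f` at `x` with increment `-t y`; by homogeneity the scalar
  -- `(-t) ^ k` is moved into the coefficient.
  let c : ℕ → ℝ := fun k => (k.factorial : ℝ)⁻¹ * (-t) ^ k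
  let T : EuclideanSpace ℝ (Fin d) → ℝ := fun y =>
    ∑ k ∈ Finset.range (n + 1), c k * iteratedFDeriv ℝ k f x (fun _ => y)
  have hDc : ∀ k, Continuous fun y => iteratedFDeriv ℝ k f x (fun _ => y) := fun k =>
    (iteratedFDeriv ℝ k f x).cont.comp (by fun_prop)
  have hTc : Continuous T := by
    refine continuous_finsetSum _ fun k _ => (hDc k).const_mul _
  have hTint : (∫ y, T y * μ y) = f x := by
    simp only [T, Finset.sum_mul, mul_assoc]
    rw [integral_finsetSum _ fun k _ => (hI _ (hDc k)).const_mul _]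
    simp_rw [integral_const_mul]
    rw [Finset.sum_range_succ', Finset.sum_eq_zero, zero_add]
    · simp [c, integral_const_mul, hμ1]
    · intro k hk
      rw [integral_multilinear_diag_mul_eq_zero hμc hμs, mul_zero]
      intro I hIk
      have := Finset.mem_range.1 hk
      exact hμmom I (by omega) (by omega)
  have hR : ∀ y, |f (x - t • y) - T y| ≤ K * t ^ (n + 1) / (n + 1).factorial * ‖y‖ ^ (n + 1) := by
    intro y
    have h := abs_sub_taylor_le hfC hfK x ((-t) • y)
    have hT : T y = ∑ k ∈ Finset.range (n + 1),
        (k.factorial : ℝ)⁻¹ * iteratedFDeriv ℝ k f x (fun _ => (-t) • y) := by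
      refine Finset.sum_congr rfl fun k _ => ?_
      rw [(iteratedFDeriv ℝ k f x).map_smul_univ (fun _ => -t) (fun _ => y)]
      simp [c, mul_assoc]
    rw [← hT, neg_smul, ← sub_eq_add_neg, norm_neg, norm_smul, Real.norm_of_nonneg ht.le] at h
    refine h.trans_eq ?_
    ring
  rw [← hTint, ← integral_sub (hI _ (by fun_prop)) (hI _ hTc), ← integral_const_mul,
    ← Real.norm_eq_abs]
  refine norm_integral_le_of_norm_le ?_ (Filter.Eventually.of_forall fun y => ?_)
  · refine Integrable.const_mul ?_ _
    have := (hI (fun y => ‖y‖ ^ (n + 1)) (by fun_prop)).norm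
    simpa using this
  · rw [← sub_mul, norm_mul, Real.norm_eq_abs, Real.norm_eq_abs, ← mul_assoc]
    gcongr
    exact hR y
end

section
/- Let v : ℝ^d → ℝ^d be Lipschitz with constant L ≤ 1/2 and satisfy ‖v(x)‖ ≤ a for all x (with a ≥ 0). Then for each z ∈ ℝ^d there exists a unique continuous function w : [-1, 1] → ℝ^d with ‖w(λ)‖ ≤ 2a for all λ ∈ [-1, 1] that satisfies the integral equation w(λ) = ∫_0^λ (v(z + s·v(z) + w(s)) - v(z)) ds for all λ ∈ [-1, 1]; moreover this solution satisfies ‖w(λ)‖ ≤ 2·L·a·|λ| for all λ ∈ [-1, 1]. -/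
open scoped NNReal

/-!
A solution is a fixed point of the Picard operator
`(T w)(l) = ∫_0^l (v (z + s v(z) + w(s)) - v z) ds` on `C([-1,1], ℝ^d)`. Since `|l| ≤ 1`, `T` is
Lipschitz with constant `L ≤ 1/2` for the sup norm, so the contraction principle gives a unique
fixed point. The integrand has norm at most `L (a + ‖w‖)`, so a fixed point satisfies
`‖w‖ ≤ L (a + ‖w‖) ≤ (a + ‖w‖) / 2`, that is `‖w‖ ≤ a`; inserting this into the integral gives
`‖w(l)‖ ≤ 2 L a |l|`.
-/

namespace FlowCorrection

open Set

variable {E : Type*} [NormedAddCommGroup E] [NormedSpace ℝ E]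

/-- The integrand of the Picard operator, with `w` extended from `[-1,1]` to `ℝ` by its endpoint
values so that it is continuous on the whole line. -/
noncomputable def integrand (v : E → E) (z : E) (w : C(Icc (-1 : ℝ) 1, E)) (s : ℝ) : E :=
  v (z + s • v z + w (projIcc (-1) 1 (by norm_num) s)) - v z

lemma continuous_integrand {v : E → E} (hv : Continuous v) (z : E) (w : C(Icc (-1 : ℝ) 1, E)) :
    Continuous (integrand v z w) := by
  have h : Continuous (projIcc (-1 : ℝ) 1 (by norm_num)) := continuous_projIcc
  unfold integrand
  fun_prop

/-- The Picard operator `(T w)(l) = ∫_0^l (v (z + s v(z) + w(s)) - v z) ds`. -/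
noncomputable def picardMap (v : E → E) (hv : Continuous v) (z : E) (w : C(Icc (-1 : ℝ) 1, E)) :
    C(Icc (-1 : ℝ) 1, E) where
  toFun l := ∫ s in (0 : ℝ)..l, integrand v z w s
  continuous_toFun :=
    (intervalIntegral.continuous_primitive
      (fun _ _ => (continuous_integrand hv z w).intervalIntegrable _ _) 0).comp
      continuous_subtype_val

lemma contracting_picardMap {v : E → E} {L : ℝ≥0} (hL : (L : ℝ) ≤ 1 / 2) (hv : LipschitzWith L v)
    (z : E) : ContractingWith L (picardMap v hv.continuous z) := by
  refine ⟨?_, LipschitzWith.of_dist_le_mul fun w w' => ?_⟩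
  · have : (L : ℝ) < 1 := by linarith
    exact_mod_cast this
  rw [ContinuousMap.dist_le (by positivity)]
  intro l
  have hl : |(l : ℝ)| ≤ 1 := abs_le.2 l.2
  rw [dist_eq_norm]
  change ‖(∫ s in (0 : ℝ)..l, integrand v z w s) - ∫ s in (0 : ℝ)..l, integrand v z w' s‖ ≤ _
  rw [← intervalIntegral.integral_sub
    ((continuous_integrand hv.continuous z w).intervalIntegrable _ _)
    ((continuous_integrand hv.continuous z w').intervalIntegrable _ _)]
  have hb : ∀ s ∈ uIoc (0 : ℝ) l, ‖integrand v z w s - integrand v z w' s‖ ≤ L * dist w w' := by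
    intro s _
    unfold integrand
    rw [sub_sub_sub_cancel_right, ← dist_eq_norm]
    refine (hv.dist_le_mul _ _).trans ?_
    rw [dist_add_left]
    gcongr
    exact ContinuousMap.dist_apply_le_dist _
  refine (intervalIntegral.norm_integral_le_of_norm_le_const hb).trans ?_
  rw [sub_zero]
  exact mul_le_of_le_one_right (by positivity) hl

lemma norm_picardMap_apply_le {v : E → E} {L : ℝ≥0} (hv : LipschitzWith L v) {a : ℝ} (z : E)
    (hz : ‖v z‖ ≤ a) (w : C(Icc (-1 : ℝ) 1, E)) (l : Icc (-1 : ℝ) 1) :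
    ‖picardMap v hv.continuous z w l‖ ≤ L * (a + ‖w‖) * |(l : ℝ)| := by
  have hl : |(l : ℝ)| ≤ 1 := abs_le.2 l.2
  have hb : ∀ s ∈ uIoc (0 : ℝ) l, ‖integrand v z w s‖ ≤ L * (a + ‖w‖) := by
    intro s hs
    have hs1 : |s| ≤ 1 := by
      have := abs_sub_left_of_mem_uIcc (uIoc_subset_uIcc hs)
      simp only [sub_zero] at this
      exact this.trans hl
    unfold integrand
    rw [← dist_eq_norm]
    refine (hv.dist_le_mul _ _).trans ?_
    rw [dist_eq_norm, add_assoc, add_sub_cancel_left]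
    gcongr
    refine (norm_add_le _ _).trans (add_le_add ?_ (w.norm_coe_le_norm _))
    rw [norm_smul, Real.norm_eq_abs]
    exact (mul_le_of_le_one_left (norm_nonneg _) hs1).trans hz
  refine (intervalIntegral.norm_integral_le_of_norm_le_const hb).trans_eq ?_
  rw [sub_zero]

/-- On `[-1,1]` the Picard operator is the integral operator of the equation, for any function `u`
on the line which restricts to `w`. -/
lemma picardMap_apply_eq {v : E → E} (hv : Continuous v) (z : E) {w : C(Icc (-1 : ℝ) 1, E)}
    {u : ℝ → E} (hu : ∀ s : Icc (-1 : ℝ) 1, w s = u s) (l : Icc (-1 : ℝ) 1) :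
    picardMap v hv z w l = ∫ s in (0 : ℝ)..l, (v (z + s • v z + u s) - v z) := by
  refine intervalIntegral.integral_congr fun s hs => ?_
  have hs' : s ∈ Icc (-1 : ℝ) 1 :=
    ordConnected_Icc.uIcc_subset (by norm_num) l.2 hs
  simp only [integrand, projIcc_of_mem _ hs', hu]

end FlowCorrection

/-- Existence and uniqueness of the correction term in the time-`λ` flow of a Lipschitz
vector field: if `v` is Lipschitz with constant `L ≤ 1/2` and `‖v‖ ≤ a`, then for each `z`
there is a unique continuous `w : [-1,1] → ℝ^d` bounded by `2a` solving
`w(λ) = ∫_0^λ (v(z + s v(z) + w(s)) - v(z)) ds`, and it satisfies `‖w(λ)‖ ≤ 2 L a |λ|`. -/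
theorem flow_correction_term_exists_unique
    (d : ℕ) (v : EuclideanSpace ℝ (Fin d) → EuclideanSpace ℝ (Fin d))
    (L : ℝ≥0) (hL : (L : ℝ) ≤ 1/2) (hv : LipschitzWith L v)
    (a : ℝ) (ha : 0 ≤ a) (hva : ∀ x, ‖v x‖ ≤ a)
    (z : EuclideanSpace ℝ (Fin d)) :
    ∃ w : ℝ → EuclideanSpace ℝ (Fin d),
      (ContinuousOn w (Set.Icc (-1) 1) ∧
        (∀ l ∈ Set.Icc (-1 : ℝ) 1, ‖w l‖ ≤ 2 * a) ∧
        (∀ l ∈ Set.Icc (-1 : ℝ) 1,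
          w l = ∫ s in (0 : ℝ)..l, (v (z + s • v z + w s) - v z))) ∧
      (∀ l ∈ Set.Icc (-1 : ℝ) 1, ‖w l‖ ≤ 2 * (L : ℝ) * a * |l|) ∧
      (∀ w' : ℝ → EuclideanSpace ℝ (Fin d),
        ContinuousOn w' (Set.Icc (-1) 1) →
        (∀ l ∈ Set.Icc (-1 : ℝ) 1, ‖w' l‖ ≤ 2 * a) →
        (∀ l ∈ Set.Icc (-1 : ℝ) 1,
          w' l = ∫ s in (0 : ℝ)..l, (v (z + s • v z + w' s) - v z)) →
        Set.EqOn w' w (Set.Icc (-1) 1)) := by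
  let T := FlowCorrection.picardMap v hv.continuous z
  have hT : ContractingWith L T := FlowCorrection.contracting_picardMap hL hv z
  let W := hT.fixedPoint
  have hW : T W = W := hT.fixedPoint_isFixedPt
  have hbd : ∀ l, ‖W l‖ ≤ L * (a + ‖W‖) * |(l : ℝ)| := fun l => by
    have h := FlowCorrection.norm_picardMap_apply_le hv z (hva z) W l
    change ‖T W l‖ ≤ _ at h
    rwa [hW] at h
  have hWa : ‖W‖ ≤ a := by
    have h : ‖W‖ ≤ L * (a + ‖W‖) := by
      refine (ContinuousMap.norm_le _ (by positivity)).2 fun l => (hbd l).trans ?_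
      exact mul_le_of_le_one_right (by positivity) (abs_le.2 l.2)
    have h' : (L : ℝ) * (a + ‖W‖) ≤ 1 / 2 * (a + ‖W‖) := by gcongr
    linarith
  let w : ℝ → EuclideanSpace ℝ (Fin d) := fun s => W (Set.projIcc (-1) 1 (by norm_num) s)
  have hw : ∀ s : Set.Icc (-1 : ℝ) 1, W s = w s := fun s => by
    simp only [w, Set.projIcc_val]
  refine ⟨w, ⟨?_, ?_, ?_⟩, ?_, ?_⟩
  · exact (W.continuous.comp continuous_projIcc).continuousOn
  · intro l hl
    rw [← hw ⟨l, hl⟩]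
    linarith [W.norm_coe_le_norm ⟨l, hl⟩]
  · intro l hl
    have h := FlowCorrection.picardMap_apply_eq hv.continuous z hw ⟨l, hl⟩
    change T W _ = _ at h
    rwa [hW, hw] at h
  · intro l hl
    rw [← hw ⟨l, hl⟩]
    refine (hbd ⟨l, hl⟩).trans ?_
    have h : (L : ℝ) * (a + ‖W‖) ≤ L * (a + a) := by gcongr
    calc (L : ℝ) * (a + ‖W‖) * |l| ≤ L * (a + a) * |l| := by gcongr
      _ = 2 * L * a * |l| := by ring
  · intro w' hc _ heq l hl
    let W' : C(Set.Icc (-1 : ℝ) 1, EuclideanSpace ℝ (Fin d)) :=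
      ⟨(Set.Icc (-1 : ℝ) 1).domRestrict w', hc.domRestrict⟩
    have hfix : T W' = W' := by
      ext1 s
      exact (FlowCorrection.picardMap_apply_eq hv.continuous z (w := W') (u := w')
        (fun _ => rfl) s).trans (heq s s.2).symm
    have hWW : W' = W := hT.fixedPoint_unique hfix
    rw [← hw ⟨l, hl⟩, ← hWW]
    rfl
end

section
/- Let n ≥ 1 and M ≥ 0 be integers, and let λ, φ : ℝ^n → ℝ be smooth functions with compact support such that ∫_{ℝ^n} x^α λ(x) dx = 0 and ∫_{ℝ^n} x^α φ(x) dx = 0 for every multi-index α with |α| ≤ M. For j ≥ 1 define the dyadic dilates λ_j(x) := 2^{jn} λ(2^j x) and φ_j(x) := 2^{jn} φ(2^j x). Then there exists a constant C > 0, depending only on λ, φ, n, M, such that for all integers j, ℓ ≥ 1, ∫_{ℝ^n} |(λ_ℓ * φ_j)(x)| dx ≤ C · 2^{-|j-ℓ|·(M+1)}, where * denotes convolution. -/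
/-!
The estimate reduces, by rescaling, to a statement at a single scale. If `a ≤ b`, the change of
variables `y ↦ y / b`, `x ↦ x / a` turns the `L¹` norm of `(a^n f(a ·)) * (b^n g(b ·))` into
`∫ |∫ f (x - t y) g y dy| dx` with `t = a / b ∈ [0, 1]` (`integral_abs_conv_dilates`).
For this quantity, expand the wide factor `f` in a Taylor polynomial of order `M` at `x`. Each
Taylor term is a homogeneous polynomial of degree at most `M` in `y`, so it is killed by the
vanishing moments of `g` (`integral_multilinear_mul_eq_zero`); the remainder is
`O((t ‖y‖)^(M+1))` uniformly in `x` (`taylor_remainder_bound`). Hence the inner integral is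
`O(t^(M+1))`, and since it vanishes for `x` outside a ball that does not depend on `t ≤ 1`, so is
its `L¹` norm (`exists_integral_abs_le`). The case `j < ℓ` follows from the case `ℓ ≤ j` by
commutativity of convolution.
-/

open MeasureTheory

/-- Order `M` Taylor remainder of a smooth compactly supported function, bounded uniformly in the
base point. -/
lemma taylor_remainder_bound {n : ℕ} (M : ℕ) {f : (Fin n → ℝ) → ℝ}
    (hf : ContDiff ℝ (⊤ : ℕ∞) f) (hfs : HasCompactSupport f) :
    ∃ K : ℝ, 0 ≤ K ∧ ∀ x y : Fin n → ℝ,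
      |f (x + y) - ∑ k ∈ Finset.range (M + 1),
        (k.factorial : ℝ)⁻¹ * iteratedFDeriv ℝ k f x (fun _ ↦ y)| ≤ K * ‖y‖ ^ (M + 1) := by
  have hcont : Continuous (iteratedFDeriv ℝ (M + 1) f) :=
    hf.continuous_iteratedFDeriv (by exact_mod_cast le_top)
  obtain ⟨K, hK⟩ := (hfs.iteratedFDeriv (𝕜 := ℝ) (M + 1)).exists_bound_of_continuous hcont
  have hK0 : 0 ≤ K := (norm_nonneg _).trans (hK 0)
  refine ⟨K, hK0, fun x y ↦ ?_⟩
  have hT := map_add_eq_sum_add_integral_iteratedFDeriv (f := f) (x := x) (y := y) (n := M)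
    (fun t _ ↦ (hf.of_le (by exact_mod_cast le_top)).contDiffAt)
  simp only [smul_eq_mul] at hT
  rw [hT, add_sub_cancel_left, abs_mul]
  have hI : |∫ t in (0 : ℝ)..1, (1 - t) ^ M * iteratedFDeriv ℝ (M + 1) f (x + t • y) (fun _ ↦ y)|
      ≤ K * ‖y‖ ^ (M + 1) := by
    have := intervalIntegral.norm_integral_le_of_norm_le_const (a := (0 : ℝ)) (b := 1)
      (C := K * ‖y‖ ^ (M + 1))
      (f := fun t ↦ (1 - t) ^ M * iteratedFDeriv ℝ (M + 1) f (x + t • y) (fun _ ↦ y)) ?_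
    · simpa using this
    · intro t ht
      rw [Set.uIoc_of_le zero_le_one] at ht
      have h1 : ‖(1 - t) ^ M‖ ≤ 1 := by
        rw [norm_pow]
        refine pow_le_one₀ (norm_nonneg _) ?_
        rw [Real.norm_eq_abs, abs_le]
        constructor <;> linarith [ht.1, ht.2]
      have h2 : ‖iteratedFDeriv ℝ (M + 1) f (x + t • y) (fun _ ↦ y)‖ ≤ K * ‖y‖ ^ (M + 1) := by
        refine ((iteratedFDeriv ℝ (M + 1) f (x + t • y)).le_opNorm _).trans ?_
        simp only [Finset.prod_const, Finset.card_univ, Fintype.card_fin]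
        gcongr
        exact hK _
      rw [norm_mul]
      calc _ ≤ 1 * (K * ‖y‖ ^ (M + 1)) := by gcongr
        _ = _ := one_mul _
  have hfac : |((M.factorial : ℝ))⁻¹| ≤ 1 := by
    rw [abs_of_nonneg (by positivity)]
    exact inv_le_one_of_one_le₀ (by exact_mod_cast M.factorial_pos)
  calc _ ≤ 1 * (K * ‖y‖ ^ (M + 1)) := by gcongr
    _ = _ := one_mul _

/-- A multilinear form evaluated on the diagonal is a homogeneous polynomial in the coordinates,
so functions with vanishing moments are orthogonal to it. -/
lemma integral_multilinear_mul_eq_zero {n M k : ℕ} (hk : k ≤ M) {g : (Fin n → ℝ) → ℝ}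
    (hg : Continuous g) (hgs : HasCompactSupport g)
    (hgM : ∀ α : Fin n → ℕ, (∑ i, α i) ≤ M → (∫ x, (∏ i, x i ^ α i) * g x) = 0)
    (A : ContinuousMultilinearMap ℝ (fun _ : Fin k ↦ Fin n → ℝ) ℝ) :
    ∫ z, A (fun _ ↦ z) * g z = 0 := by
  classical
  have hexp : ∀ z : Fin n → ℝ, A (fun _ ↦ z) * g z =
      ∑ r : Fin k → Fin n, A (fun i ↦ Pi.single (r i) 1) *
        ((∏ j, z j ^ (Finset.univ.filter fun i ↦ r i = j).card) * g z) := by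
    intro z
    have hz : z = ∑ j, z j • (Pi.single j (1 : ℝ) : Fin n → ℝ) := by
      simpa using (pi_eq_sum_univ' z)
    have h1 : A (fun _ ↦ z) = ∑ r : Fin k → Fin n,
        A (fun i ↦ z (r i) • (Pi.single (r i) (1 : ℝ) : Fin n → ℝ)) := by
      conv_lhs => rw [hz]
      exact A.map_sum (fun _ j ↦ z j • (Pi.single j (1 : ℝ) : Fin n → ℝ))
    rw [h1, Finset.sum_mul]
    refine Finset.sum_congr rfl fun r _ ↦ ?_
    rw [A.map_smul_univ (fun i ↦ z (r i)), smul_eq_mul]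
    have h2 : ∏ i, z (r i) = ∏ j, z j ^ (Finset.univ.filter fun i ↦ r i = j).card := by
      simp_rw [← Finset.prod_const]
      rw [Finset.prod_fiberwise_of_maps_to' (fun _ _ ↦ Finset.mem_univ _)]
    rw [h2]
    ring
  simp_rw [hexp]
  rw [integral_finsetSum]
  · refine Finset.sum_eq_zero fun r _ ↦ ?_
    rw [integral_const_mul, hgM, mul_zero]
    rw [← Finset.card_eq_sum_card_fiberwise (fun _ _ ↦ Finset.mem_coe.2 (Finset.mem_univ _))]
    simpa using hk
  · intro r _
    refine Integrable.const_mul ?_ _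
    refine Continuous.integrable_of_hasCompactSupport (by fun_prop) hgs.mul_left

/-- Single-scale estimate: the vanishing moments of `g` give `t^(M+1)` decay of the `L¹` norm of
the convolution of `f` with the `t`-dilate of `g`. -/
lemma exists_integral_abs_le {n M : ℕ} {f g : (Fin n → ℝ) → ℝ}
    (hf : ContDiff ℝ (⊤ : ℕ∞) f) (hfs : HasCompactSupport f)
    (hg : Continuous g) (hgs : HasCompactSupport g)
    (hgM : ∀ α : Fin n → ℕ, (∑ i, α i) ≤ M → (∫ x, (∏ i, x i ^ α i) * g x) = 0) :
    ∃ C : ℝ, 0 ≤ C ∧ ∀ t : ℝ, 0 ≤ t → t ≤ 1 →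
      (∫ x, |∫ z, f (x - t • z) * g z|) ≤ C * t ^ (M + 1) := by
  obtain ⟨K, hK0, hK⟩ := taylor_remainder_bound M hf hfs
  obtain ⟨R, hR⟩ := hfs.isCompact.isBounded.subset_closedBall 0
  obtain ⟨S, hS⟩ := hgs.isCompact.isBounded.subset_closedBall 0
  have hfR : ∀ x, f x ≠ 0 → ‖x‖ ≤ R := fun x hx ↦ by
    simpa using hR (subset_tsupport f hx)
  have hgS : ∀ x, g x ≠ 0 → ‖x‖ ≤ S := fun x hx ↦ by
    simpa using hS (subset_tsupport g hx)
  set B : ℝ := ∫ z, ‖z‖ ^ (M + 1) * |g z| with hB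
  have hB0 : 0 ≤ B := integral_nonneg fun z ↦ by positivity
  set V : ℝ := volume.real (Metric.closedBall (0 : Fin n → ℝ) (R + S)) with hV
  refine ⟨K * B * V, by positivity, fun t ht0 ht1 ↦ ?_⟩
  have hpt : ∀ x, |∫ z, f (x - t • z) * g z| ≤ K * B * t ^ (M + 1) := by
    intro x
    set P : (Fin n → ℝ) → ℝ := fun z ↦ ∑ k ∈ Finset.range (M + 1),
      (k.factorial : ℝ)⁻¹ * iteratedFDeriv ℝ k f x (fun _ ↦ -(t • z)) with hP
    have hPc : Continuous P := by
      refine continuous_finsetSum _ fun k _ ↦ continuous_const.mul ?_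
      exact (iteratedFDeriv ℝ k f x).cont.comp (by fun_prop)
    have hfc := hf.continuous
    have hint1 : Integrable fun z ↦ f (x - t • z) * g z :=
      Continuous.integrable_of_hasCompactSupport (by fun_prop) hgs.mul_left
    have hint2 : Integrable fun z ↦ P z * g z :=
      Continuous.integrable_of_hasCompactSupport (by fun_prop) hgs.mul_left
    have hP0 : ∫ z, P z * g z = 0 := by
      simp only [hP, Finset.sum_mul]
      rw [integral_finsetSum]
      · refine Finset.sum_eq_zero fun k hk ↦ ?_
        have : ∀ z : Fin n → ℝ, (k.factorial : ℝ)⁻¹ *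
            iteratedFDeriv ℝ k f x (fun _ ↦ -(t • z)) * g z =
            ((k.factorial : ℝ)⁻¹ * (-t) ^ k) *
              (iteratedFDeriv ℝ k f x (fun _ ↦ z) * g z) := by
          intro z
          have h := (iteratedFDeriv ℝ k f x).map_smul_univ (fun _ ↦ -t) (fun _ ↦ z)
          simp only [neg_smul, Finset.prod_const, Finset.card_univ, Fintype.card_fin,
            smul_eq_mul] at h
          rw [h]
          ring
        simp_rw [this]
        rw [integral_const_mul, integral_multilinear_mul_eq_zero
          (Nat.lt_succ_iff.1 (Finset.mem_range.1 hk)) hg hgs hgM, mul_zero]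
      · intro k _
        refine Continuous.integrable_of_hasCompactSupport ?_ hgs.mul_left
        refine (continuous_const.mul ?_).mul hg
        exact (iteratedFDeriv ℝ k f x).cont.comp (by fun_prop)
    have heq : ∫ z, f (x - t • z) * g z = ∫ z, (f (x - t • z) - P z) * g z := by
      simp_rw [sub_mul]
      rw [integral_sub hint1 hint2, hP0, sub_zero]
    rw [heq]
    have hintB : Integrable fun z : Fin n → ℝ ↦ ‖z‖ ^ (M + 1) * |g z| :=
      Continuous.integrable_of_hasCompactSupport (by fun_prop) (hgs.abs.mul_left)
    have hmaj := norm_integral_le_of_norm_le (hintB.const_mul (K * t ^ (M + 1)))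
      (f := fun z ↦ (f (x - t • z) - P z) * g z) (Filter.Eventually.of_forall fun z ↦ ?_)
    · rw [integral_const_mul, Real.norm_eq_abs] at hmaj
      calc _ ≤ _ := hmaj
        _ = _ := by rw [hB]; ring
    · have h := hK x (-(t • z))
      rw [← sub_eq_add_neg, norm_neg, norm_smul, Real.norm_of_nonneg ht0, mul_pow] at h
      rw [norm_mul, Real.norm_eq_abs, Real.norm_eq_abs]
      calc _ ≤ K * (t ^ (M + 1) * ‖z‖ ^ (M + 1)) * |g z| := by gcongr
        _ = _ := by ring
  -- Since `t ≤ 1`, the inner integral is supported in a ball whose radius does not depend on `t`.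
  have hsupp : ∀ x, x ∉ Metric.closedBall (0 : Fin n → ℝ) (R + S) →
      |∫ z, f (x - t • z) * g z| = 0 := by
    intro x hx
    have : ∀ z, f (x - t • z) * g z = 0 := by
      intro z
      by_contra hne
      have h1 := hfR _ (left_ne_zero_of_mul hne)
      have h2 := hgS _ (right_ne_zero_of_mul hne)
      apply hx
      rw [mem_closedBall_zero_iff]
      calc ‖x‖ = ‖(x - t • z) + t • z‖ := by rw [sub_add_cancel]
        _ ≤ ‖x - t • z‖ + ‖t • z‖ := norm_add_le _ _
        _ ≤ R + S := by
          rw [norm_smul, Real.norm_of_nonneg ht0]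
          nlinarith [norm_nonneg z]
    simp [this]
  rw [← setIntegral_eq_integral_of_forall_compl_eq_zero hsupp]
  have hfin : volume (Metric.closedBall (0 : Fin n → ℝ) (R + S)) < ⊤ :=
    measure_closedBall_lt_top
  have hle := norm_setIntegral_le_of_norm_le_const
    (f := fun x ↦ |∫ z, f (x - t • z) * g z|) hfin
    (fun x _ ↦ by rw [Real.norm_eq_abs, abs_abs]; exact hpt x)
  calc _ ≤ _ := (le_abs_self _).trans hle
    _ = _ := by rw [hV]; ring

lemma integral_dilate {n : ℕ} {a : ℝ} (ha : 0 < a) (h : (Fin n → ℝ) → ℝ) :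
    ∫ y, a ^ n * h (a • y) = ∫ y, h y := by
  rw [integral_const_mul, Measure.integral_comp_smul, Module.finrank_fin_fun, smul_eq_mul,
    abs_of_pos (by positivity), mul_inv_cancel_left₀ (by positivity)]

/-- The `L¹` norm of a convolution of two dilates depends only on the ratio of the scales. -/
lemma integral_abs_conv_dilates {n : ℕ} {a b : ℝ} (ha : 0 < a) (hb : 0 < b)
    (f g : (Fin n → ℝ) → ℝ) :
    (∫ x, |∫ y, (a ^ n * f (a • (x - y))) * (b ^ n * g (b • y))|) =
      ∫ x, |∫ z, f (x - (a / b) • z) * g z| := by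
  rw [← integral_dilate ha (fun x ↦ |∫ z, f (x - (a / b) • z) * g z|)]
  refine integral_congr_ae (Filter.Eventually.of_forall fun x ↦ ?_)
  have h : ∫ y, (a ^ n * f (a • (x - y))) * (b ^ n * g (b • y)) =
      a ^ n * ∫ z, f (a • x - (a / b) • z) * g z := by
    rw [← integral_const_mul,
      ← integral_dilate hb (fun z ↦ a ^ n * (f (a • x - (a / b) • z) * g z))]
    refine integral_congr_ae (Filter.Eventually.of_forall fun y ↦ ?_)
    simp only [smul_smul, div_mul_cancel₀ a hb.ne', smul_sub]
    ring
  simp only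
  rw [h, abs_mul, abs_of_pos (by positivity)]

lemma two_pow_div_pow (j l M : ℕ) :
    ((2 : ℝ) ^ l / 2 ^ j) ^ (M + 1) = (2 : ℝ) ^ (-(((j : ℝ) - (l : ℝ)) * ((M : ℝ) + 1))) := by
  rw [← Real.rpow_natCast 2 l, ← Real.rpow_natCast 2 j, ← Real.rpow_sub two_pos,
    ← Real.rpow_natCast _ (M + 1), ← Real.rpow_mul two_pos.le]
  congr 1
  push_cast
  ring

/-- Littlewood–Paley almost-orthogonality: if `lam` and `phi` are smooth, compactly
supported kernels on `ℝ^n` with vanishing moments up to order `M`, then the `L¹` norms of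
the convolutions of their dyadic dilates `lam_ℓ(x) = 2^{ℓn} lam(2^ℓ x)`,
`phi_j(x) = 2^{jn} phi(2^j x)` decay like `2^{-|j-ℓ|(M+1)}`. -/
theorem dyadic_convolution_almost_orthogonality
    (n M : ℕ) (hn : 1 ≤ n)
    (lam phi : (Fin n → ℝ) → ℝ)
    (hlam : ContDiff ℝ (⊤ : ℕ∞) lam) (hlams : HasCompactSupport lam)
    (hphi : ContDiff ℝ (⊤ : ℕ∞) phi) (hphis : HasCompactSupport phi)
    (hlamM : ∀ α : Fin n → ℕ, (∑ i, α i) ≤ M →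
      (∫ x, (∏ i, x i ^ α i) * lam x) = 0)
    (hphiM : ∀ α : Fin n → ℕ, (∑ i, α i) ≤ M →
      (∫ x, (∏ i, x i ^ α i) * phi x) = 0) :
    ∃ C > 0, ∀ j l : ℕ, 1 ≤ j → 1 ≤ l →
      (∫ x, |∫ y, ((2 : ℝ) ^ (l * n) * lam ((2 : ℝ) ^ l • (x - y))) *
          ((2 : ℝ) ^ (j * n) * phi ((2 : ℝ) ^ j • y))|)
        ≤ C * (2 : ℝ) ^ (-(|(j : ℝ) - (l : ℝ)| * ((M : ℝ) + 1))) := by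
  obtain ⟨C₁, hC₁, h₁⟩ := exists_integral_abs_le hlam hlams hphi.continuous hphis hphiM
  obtain ⟨C₂, hC₂, h₂⟩ := exists_integral_abs_le hphi hphis hlam.continuous hlams hlamM
  refine ⟨C₁ + C₂ + 1, by positivity, fun j l _ _ ↦ ?_⟩
  simp only [pow_mul]
  have hj : (0 : ℝ) < 2 ^ j := by positivity
  have hl : (0 : ℝ) < 2 ^ l := by positivity
  rcases le_total l j with h | h
  · rw [integral_abs_conv_dilates hl hj, abs_of_nonneg (by simpa using h), ← two_pow_div_pow]
    refine (h₁ _ (by positivity) ((div_le_one hj).2 (pow_le_pow_right₀ one_le_two h))).trans ?_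
    gcongr
    linarith
  · have hcomm : ∀ x : Fin n → ℝ,
        (∫ y, (((2 : ℝ) ^ l) ^ n * lam ((2 : ℝ) ^ l • (x - y))) *
          (((2 : ℝ) ^ j) ^ n * phi ((2 : ℝ) ^ j • y))) =
        ∫ y, (((2 : ℝ) ^ j) ^ n * phi ((2 : ℝ) ^ j • (x - y))) *
          (((2 : ℝ) ^ l) ^ n * lam ((2 : ℝ) ^ l • y)) := by
      intro x
      rw [← integral_sub_left_eq_self _ volume x]
      simp only [sub_sub_cancel, mul_comm]
    simp_rw [hcomm]
    rw [integral_abs_conv_dilates hj hl, abs_sub_comm, abs_of_nonneg (by simpa using h),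
      ← two_pow_div_pow]
    refine (h₂ _ (by positivity) ((div_le_one hl).2 (pow_le_pow_right₀ one_le_two h))).trans ?_
    gcongr
    linarith
end
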